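/- arXiv:1409.4150 — 6 statements merged into one kernel-verified Lean document; each statement's English description precedes it below -/
import Mathlib

section
/- Weak duality for the mechanism-design program: Let X = ∏_{i=1}^n [aᵢ, bᵢ] ⊂ ℝⁿ be a compact box with 0 ≤ aᵢ < bᵢ for each i, and let μ be a finite signed Borel measure on X. Then for every u ∈ 𝒰(X) ∩ ℒ₁(X) and every finite nonnegative Borel measure γ on X × X whose marginals satisfy γ₁ − γ₂ ≽_cvx μ, one has ∫_X u dμ ≤ ∫_{X×X} ‖x − y‖₁ dγ(x,y); consequently sup_{u ∈ 𝒰(X) ∩ ℒ₁(X)} ∫_X u dμ ≤ inf_{γ : γ₁ − γ₂ ≽_cvx μ} ∫_{X×X} ‖x − y‖₁ dγ. -/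
open MeasureTheory Set

/-- ℓ¹ distance on `Fin n → ℝ`. -/
noncomputable def l1dist {n : ℕ} (x y : Fin n → ℝ) : ℝ := ∑ i, |x i - y i|

/-- The box `∏ i, [a i, b i]` in `ℝⁿ`. -/
def box {n : ℕ} (a b : Fin n → ℝ) : Set (Fin n → ℝ) := {x | ∀ i, x i ∈ Set.Icc (a i) (b i)}

/-- `u ∈ 𝒰(X)`: continuous, coordinatewise nondecreasing and convex on `X`. -/
def memU {n : ℕ} (X : Set (Fin n → ℝ)) (u : (Fin n → ℝ) → ℝ) : Prop :=
  ContinuousOn u X ∧ (∀ x ∈ X, ∀ y ∈ X, (∀ i, x i ≤ y i) → u x ≤ u y) ∧ ConvexOn ℝ X u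

/-- `u ∈ ℒ₁(X)`: 1-Lipschitz with respect to the ℓ¹ norm on `X`. -/
def memL1 {n : ℕ} (X : Set (Fin n → ℝ)) (u : (Fin n → ℝ) → ℝ) : Prop :=
  ∀ x ∈ X, ∀ y ∈ X, u x - u y ≤ l1dist x y

theorem isCompact_box {n : ℕ} (a b : Fin n → ℝ) : IsCompact (box a b) := by
  have h : box a b = Set.pi Set.univ fun i => Set.Icc (a i) (b i) := by
    ext x
    simp [box, Set.mem_pi, -Set.pi_univ_Icc]
  rw [h]
  exact isCompact_univ_pi fun i => isCompact_Icc

/-- A function continuous on a compact set is integrable against a finite measure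
concentrated on that set. -/
theorem integrable_of_continuousOn_of_measure_compl_eq_zero {α : Type*} [TopologicalSpace α]
    [T2Space α] [MeasurableSpace α] [OpensMeasurableSpace α]
    {ν : Measure α} [IsFiniteMeasure ν] {K : Set α} (hK : IsCompact K) (hν : ν Kᶜ = 0)
    {f : α → ℝ} (hf : ContinuousOn f K) : Integrable f ν := by
  have h : ν.restrict K = ν := Measure.restrict_eq_self_of_ae_mem hν
  rw [← h]
  exact hf.integrableOn_of_subset_isCompact hK hK.measurableSet subset_rfl (measure_ne_top ν K)

/-- **Weak duality.** The (finite signed Borel) measure `μ` on the box `X` is represented by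
its positive and negative parts `μp`, `μn` (finite nonnegative Borel measures supported in `X`).
For every feasible utility `u ∈ 𝒰(X) ∩ ℒ₁(X)` and every finite nonnegative Borel measure `γ`
on `X × X` whose marginals satisfy `γ₁ - γ₂ ≽_cvx μ`, one has
`∫ u dμ ≤ ∫ ‖x - y‖₁ dγ(x,y)`. -/
theorem weak_duality {n : ℕ} (a b : Fin n → ℝ) (hab : ∀ i, 0 ≤ a i ∧ a i < b i)
    (μp μn : Measure (Fin n → ℝ)) [IsFiniteMeasure μp] [IsFiniteMeasure μn]
    (hμp : μp (box a b)ᶜ = 0) (hμn : μn (box a b)ᶜ = 0)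
    (u : (Fin n → ℝ) → ℝ) (hu : memU (box a b) u) (hu1 : memL1 (box a b) u)
    (γ : Measure ((Fin n → ℝ) × (Fin n → ℝ))) (hγfin : IsFiniteMeasure γ)
    (hγsupp : γ ((box a b ×ˢ box a b)ᶜ) = 0)
    (hdom : ∀ v : (Fin n → ℝ) → ℝ, memU (box a b) v →
      (∫ x, v x ∂μp) - (∫ x, v x ∂μn) ≤
        (∫ x, v x ∂(γ.map Prod.fst)) - (∫ x, v x ∂(γ.map Prod.snd))) :
    (∫ x, u x ∂μp) - (∫ x, u x ∂μn) ≤ ∫ p, l1dist p.1 p.2 ∂γ := by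
  have hK : IsCompact (box a b) := isCompact_box a b
  have hKK : IsCompact (box a b ×ˢ box a b) := hK.prod hK
  have hmem : ∀ᵐ p ∂γ, p ∈ box a b ×ˢ box a b := hγsupp
  have hfst : (γ.map Prod.fst) (box a b)ᶜ = 0 := by
    rw [Measure.map_apply measurable_fst hK.measurableSet.compl]
    refine measure_mono_null ?_ hγsupp
    intro p hp h
    exact hp h.1
  have hsnd : (γ.map Prod.snd) (box a b)ᶜ = 0 := by
    rw [Measure.map_apply measurable_snd hK.measurableSet.compl]
    refine measure_mono_null ?_ hγsupp
    intro p hp h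
    exact hp h.2
  have hi1 : Integrable u (γ.map Prod.fst) :=
    integrable_of_continuousOn_of_measure_compl_eq_zero hK hfst hu.1
  have hi2 : Integrable u (γ.map Prod.snd) :=
    integrable_of_continuousOn_of_measure_compl_eq_zero hK hsnd hu.1
  have hj1 : Integrable (fun p : (Fin n → ℝ) × (Fin n → ℝ) => u p.1) γ :=
    hi1.comp_measurable measurable_fst
  have hj2 : Integrable (fun p : (Fin n → ℝ) × (Fin n → ℝ) => u p.2) γ :=
    hi2.comp_measurable measurable_snd
  have hcost : Integrable (fun p : (Fin n → ℝ) × (Fin n → ℝ) => l1dist p.1 p.2) γ := by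
    refine integrable_of_continuousOn_of_measure_compl_eq_zero hKK hγsupp
      (Continuous.continuousOn ?_)
    unfold l1dist
    fun_prop
  refine (hdom u hu).trans ?_
  rw [integral_map measurable_fst.aemeasurable hi1.aestronglyMeasurable,
    integral_map measurable_snd.aemeasurable hi2.aestronglyMeasurable, ← integral_sub hj1 hj2]
  refine integral_mono_ae (hj1.sub hj2) hcost ?_
  filter_upwards [hmem] with p hp
  exact hu1 p.1 hp.1 p.2 hp.2
end

section
/- Fenchel–Rockafellar duality step: Let X be a compact convex subset of ℝⁿ and let μ be a finite signed Borel measure on X with μ(X) = 0 and Jordan decomposition μ = μ₊ − μ₋. Then inf over finite nonnegative Borel measures γ on X × X with γ₁ ≽_cvx μ₊ and γ₂ ≼_cvx μ₋ of ∫_{X×X} ‖x − y‖₁ dγ(x,y) equals sup over pairs φ, ψ ∈ 𝒰(X) satisfying φ(x) − ψ(y) ≤ ‖x − y‖₁ for all x, y ∈ X of (∫_X φ dμ₊ − ∫_X ψ dμ₋), and the infimum on the left-hand side is achieved by some γ. -/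
open MeasureTheory Set

open scoped CompactlySupported

/-- A pointed cone of pairs `(f, r)` that contains `(f, 0)` for every `f ≤ 0`, contains some
`(f, r)` for every `f`, and contains `(0, r)` only for `r ≥ 0`, admits a finite measure `γ` with
`∫ f ∂γ ≤ r` for all its elements `(f, r)`. -/
theorem exists_measure_integral_le_of_pointedCone {K : Type*} [TopologicalSpace K] [CompactSpace K]
    [T2Space K] [MeasurableSpace K] [BorelSpace K] (S : PointedCone ℝ (C_c(K, ℝ) × ℝ))
    (hnonneg : ∀ r, ((0 : C_c(K, ℝ)), r) ∈ S → 0 ≤ r) (hdense : ∀ f, ∃ r, (f, r) ∈ S)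
    (hmono : ∀ f : C_c(K, ℝ), f ≤ 0 → (f, (0 : ℝ)) ∈ S) :
    ∃ γ : Measure K, IsFiniteMeasure γ ∧ ∀ f r, (f, r) ∈ S → ∫ x, f x ∂γ ≤ r := by
  let F : (C_c(K, ℝ) × ℝ) →ₗ.[ℝ] ℝ :=
    { domain := LinearMap.ker (LinearMap.fst ℝ C_c(K, ℝ) ℝ)
      toFun := (LinearMap.snd ℝ C_c(K, ℝ) ℝ).comp (Submodule.subtype _) }
  obtain ⟨g, hgF, hgS⟩ := riesz_extension S F
    (by
      rintro ⟨⟨f, r⟩, hf⟩ hS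
      obtain rfl : f = 0 := hf
      exact hnonneg r hS)
    (by
      rintro ⟨f, r⟩
      obtain ⟨r', hr'⟩ := hdense f
      refine ⟨⟨(0, r' - r), rfl⟩, ?_⟩
      simpa using hr')
  have hg_zero (r : ℝ) : g (0, r) = r := hgF ⟨(0, r), rfl⟩
  have hg_add (f : C_c(K, ℝ)) (r : ℝ) : g (f, r) = g (f, 0) + r := by
    rw [← hg_zero r, ← map_add, hg_zero]
    simp
  let Λ : C_c(K, ℝ) →ₚ[ℝ] ℝ := PositiveLinearMap.mk₀
    (-(g.comp (LinearMap.inl ℝ C_c(K, ℝ) ℝ))) (by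
      intro f hf
      have h := hgS _ (hmono (-f) (by simpa using hf))
      have h' : g (-f, 0) = -g (f, 0) := by
        rw [← map_neg]
        simp
      simpa [h'] using h)
  refine ⟨RealRMK.rieszMeasure Λ, inferInstance, fun f r hfr ↦ ?_⟩
  rw [RealRMK.integral_rieszMeasure]
  have h := hgS _ hfr
  rw [hg_add] at h
  have hΛ : Λ f = -g (f, 0) := rfl
  linarith

theorem continuous_l1dist {n : ℕ} :
    Continuous fun p : (Fin n → ℝ) × (Fin n → ℝ) ↦ l1dist p.1 p.2 := by
  unfold l1dist
  fun_prop

theorem ContinuousOn.integrable_of_measure_compl_eq_zero {E : Type*} [TopologicalSpace E]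
    [T2Space E] [SecondCountableTopology E] [MeasurableSpace E] [BorelSpace E] {X : Set E}
    {μ : Measure E} [IsFiniteMeasure μ] {u : E → ℝ} (hu : ContinuousOn u X) (hX : IsCompact X)
    (hμ : μ Xᶜ = 0) : Integrable u μ := by
  have h := hu.integrableOn_compact (μ := μ) hX
  rwa [IntegrableOn, Measure.restrict_eq_self_of_ae_mem (mem_ae_iff.2 hμ)] at h

theorem memU.add {n : ℕ} {X : Set (Fin n → ℝ)} {u v : (Fin n → ℝ) → ℝ} (hu : memU X u)
    (hv : memU X v) : memU X (u + v) :=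
  ⟨hu.1.add hv.1, fun x hx y hy h ↦ add_le_add (hu.2.1 x hx y hy h) (hv.2.1 x hx y hy h),
    hu.2.2.add hv.2.2⟩

theorem memU.smul {n : ℕ} {X : Set (Fin n → ℝ)} {u : (Fin n → ℝ) → ℝ} (hu : memU X u) {c : ℝ}
    (hc : 0 ≤ c) : memU X (c • u) :=
  ⟨hu.1.const_smul c, fun x hx y hy h ↦ mul_le_mul_of_nonneg_left (hu.2.1 x hx y hy h) hc,
    hu.2.2.smul hc⟩

theorem memU_const {n : ℕ} {X : Set (Fin n → ℝ)} (hX : Convex ℝ X) (c : ℝ) :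
    memU X fun _ ↦ c :=
  ⟨continuousOn_const, fun _ _ _ _ _ ↦ le_rfl, convexOn_const c hX⟩

/-- If `φ x - ψ y ≤ C` on `X × X`, then integrating against two measures of the same mass on `X`
gives `∫ φ - ∫ ψ ≤ C * mass`. -/
theorem integral_sub_integral_le_of_sub_le {E : Type*} [TopologicalSpace E]
    [T2Space E] [SecondCountableTopology E] [MeasurableSpace E] [BorelSpace E] {X : Set E}
    (hX : IsCompact X) {μ ν : Measure E} [IsFiniteMeasure μ] [IsFiniteMeasure ν]
    (hμ : μ Xᶜ = 0) (hν : ν Xᶜ = 0) (hmass : μ univ = ν univ) {φ ψ : E → ℝ}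
    (hφ : ContinuousOn φ X) (hψ : ContinuousOn ψ X) {C : ℝ}
    (h : ∀ x ∈ X, ∀ y ∈ X, φ x - ψ y ≤ C) :
    (∫ x, φ x ∂μ) - ∫ x, ψ x ∂ν ≤ C * μ.real univ := by
  rcases X.eq_empty_or_nonempty with rfl | hne
  · have hμ0 : μ = 0 := by simpa using hμ
    have hν0 : ν = 0 := by simpa using hν
    simp [hμ0, hν0]
  obtain ⟨y, hy, hmin⟩ := hX.exists_isMinOn hne hψ
  have h₁ : ∫ x, φ x ∂μ ≤ ∫ _, (ψ y + C) ∂μ := by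
    refine integral_mono_ae (hφ.integrable_of_measure_compl_eq_zero hX hμ)
      (integrable_const _) ?_
    filter_upwards [mem_ae_iff.2 hμ] with x hx
    linarith [h x hx y hy]
  have h₂ : ∫ _, ψ y ∂ν ≤ ∫ x, ψ x ∂ν := by
    refine integral_mono_ae (integrable_const _)
      (hψ.integrable_of_measure_compl_eq_zero hX hν) ?_
    filter_upwards [mem_ae_iff.2 hν] with x hx
    exact hmin hx
  have hreal : ν.real univ = μ.real univ := by simp [Measure.real, hmass]
  simp only [integral_const, smul_eq_mul, hreal] at h₁ h₂
  linarith

/-- The marginals of a measure on `X × X` are measures on `X`. -/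
theorem map_fst_snd_compl_eq_zero {E : Type*} [MeasurableSpace E] {X : Set E}
    (hX : MeasurableSet X) {γ : Measure (E × E)} (hγ : γ (X ×ˢ X)ᶜ = 0) :
    (γ.map Prod.fst) Xᶜ = 0 ∧ (γ.map Prod.snd) Xᶜ = 0 := by
  rw [Measure.map_apply measurable_fst hX.compl, Measure.map_apply measurable_snd hX.compl]
  exact ⟨measure_mono_null (t := (X ×ˢ X)ᶜ) (fun p hp hq ↦ hp hq.1) hγ,
    measure_mono_null (t := (X ×ˢ X)ᶜ) (fun p hp hq ↦ hp hq.2) hγ⟩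

/-- Weak duality: dual-feasible pairs bound the cost of feasible couplings from below. -/
theorem integral_sub_integral_le_cost {n : ℕ} {X : Set (Fin n → ℝ)} (hX : IsCompact X)
    {γ : Measure ((Fin n → ℝ) × (Fin n → ℝ))} [IsFiniteMeasure γ] (hγ : γ (X ×ˢ X)ᶜ = 0)
    {φ ψ : (Fin n → ℝ) → ℝ} (hφ : ContinuousOn φ X) (hψ : ContinuousOn ψ X)
    (h : ∀ x ∈ X, ∀ y ∈ X, φ x - ψ y ≤ l1dist x y) :
    (∫ x, φ x ∂(γ.map Prod.fst)) - ∫ x, ψ x ∂(γ.map Prod.snd) ≤ ∫ p, l1dist p.1 p.2 ∂γ := by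
  obtain ⟨h₁, h₂⟩ := map_fst_snd_compl_eq_zero hX.measurableSet hγ
  have i₁ := hφ.integrable_of_measure_compl_eq_zero hX h₁
  have i₂ := hψ.integrable_of_measure_compl_eq_zero hX h₂
  rw [integral_map measurable_fst.aemeasurable i₁.aestronglyMeasurable,
    integral_map measurable_snd.aemeasurable i₂.aestronglyMeasurable]
  have j₁ : Integrable (fun p ↦ φ p.1) γ := i₁.comp_measurable measurable_fst
  have j₂ : Integrable (fun p ↦ ψ p.2) γ := i₂.comp_measurable measurable_snd
  rw [← integral_sub j₁ j₂]
  refine integral_mono_ae (j₁.sub j₂)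
    (continuous_l1dist.continuousOn.integrable_of_measure_compl_eq_zero (hX.prod hX) hγ) ?_
  filter_upwards [mem_ae_iff.2 hγ] with p hp
  exact h _ hp.1 _ hp.2

/-- The pairs `(f, r)` such that `f (x, y) ≤ ψ y - φ x + t * ‖x - y‖₁` on `X × X` and
`∫ ψ ∂ν - ∫ φ ∂μ + t * s ≤ r` for some `φ, ψ ∈ 𝒰(X)` and `t ≥ 0`. -/
def majorantCone {n : ℕ} {X : Set (Fin n → ℝ)} (hX : IsCompact X) (hconv : Convex ℝ X)
    {μ ν : Measure (Fin n → ℝ)} [IsFiniteMeasure μ] [IsFiniteMeasure ν]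
    (hμ : μ Xᶜ = 0) (hν : ν Xᶜ = 0) (s : ℝ) : PointedCone ℝ (C_c(X × X, ℝ) × ℝ) where
  carrier := {q | ∃ φ ψ : (Fin n → ℝ) → ℝ, ∃ t : ℝ, memU X φ ∧ memU X ψ ∧ 0 ≤ t ∧
    (∀ x y : X, q.1 (x, y) ≤ ψ y - φ x + t * l1dist (x : Fin n → ℝ) y) ∧
    (∫ x, ψ x ∂ν) - (∫ x, φ x ∂μ) + t * s ≤ q.2}
  zero_mem' := ⟨fun _ ↦ 0, fun _ ↦ 0, 0, memU_const hconv 0, memU_const hconv 0, le_rfl,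
    by simp, by simp⟩
  add_mem' := by
    rintro ⟨f, r⟩ ⟨f', r'⟩ ⟨φ, ψ, t, hφ, hψ, ht, h, hr⟩ ⟨φ', ψ', t', hφ', hψ', ht', h', hr'⟩
    refine ⟨φ + φ', ψ + ψ', t + t', hφ.add hφ', hψ.add hψ', add_nonneg ht ht', ?_, ?_⟩
    · intro x y
      have := add_le_add (h x y) (h' x y)
      simp only [Prod.mk_add_mk, CompactlySupportedContinuousMap.coe_add, Pi.add_apply] at this ⊢
      linarith
    · rw [integral_add' (hφ.1.integrable_of_measure_compl_eq_zero hX hμ)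
          (hφ'.1.integrable_of_measure_compl_eq_zero hX hμ),
        integral_add' (hψ.1.integrable_of_measure_compl_eq_zero hX hν)
          (hψ'.1.integrable_of_measure_compl_eq_zero hX hν)]
      simp only [Prod.mk_add_mk] at hr hr' ⊢
      linarith
  smul_mem' := by
    rintro ⟨c, hc⟩ ⟨f, r⟩ ⟨φ, ψ, t, hφ, hψ, ht, h, hr⟩
    refine ⟨c • φ, c • ψ, c * t, hφ.smul hc, hψ.smul hc, mul_nonneg hc ht, ?_, ?_⟩
    · intro x y
      have := mul_le_mul_of_nonneg_left (h x y) hc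
      change c * f (x, y) ≤ c * ψ y - c * φ x + c * t * _
      linarith
    · have := mul_le_mul_of_nonneg_left hr hc
      simp only [Pi.smul_apply, smul_eq_mul, integral_const_mul]
      change _ ≤ c * r
      linarith

/-- Strong duality: a number dominating all dual values dominates the cost of some feasible
coupling. -/
theorem exists_coupling_cost_le {n : ℕ} {X : Set (Fin n → ℝ)} (hX : IsCompact X)
    (hconv : Convex ℝ X) {μ ν : Measure (Fin n → ℝ)} [IsFiniteMeasure μ] [IsFiniteMeasure ν]
    (hμ : μ Xᶜ = 0) (hν : ν Xᶜ = 0) (hmass : μ univ = ν univ) {s : ℝ}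
    (hs : ∀ φ ψ : (Fin n → ℝ) → ℝ, memU X φ → memU X ψ →
      (∀ x ∈ X, ∀ y ∈ X, φ x - ψ y ≤ l1dist x y) → (∫ x, φ x ∂μ) - ∫ x, ψ x ∂ν ≤ s) :
    ∃ γ : Measure ((Fin n → ℝ) × (Fin n → ℝ)), IsFiniteMeasure γ ∧ γ (X ×ˢ X)ᶜ = 0 ∧
      (∀ v, memU X v → ∫ x, v x ∂μ ≤ ∫ x, v x ∂(γ.map Prod.fst)) ∧
      (∀ v, memU X v → ∫ x, v x ∂(γ.map Prod.snd) ≤ ∫ x, v x ∂ν) ∧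
      ∫ p, l1dist p.1 p.2 ∂γ ≤ s := by
  have : CompactSpace X := isCompact_iff_compactSpace.1 hX
  obtain ⟨γ, hγfin, hγ⟩ := exists_measure_integral_le_of_pointedCone
    (majorantCone hX hconv hμ hν s)
    (by
      rintro r ⟨φ, ψ, t, hφ, hψ, ht, h, hr⟩
      refine le_trans ?_ hr
      rcases ht.eq_or_lt with rfl | ht
      · have := integral_sub_integral_le_of_sub_le hX hμ hν hmass hφ.1 hψ.1 (C := 0)
          (fun x hx y hy ↦ by
            have := h ⟨x, hx⟩ ⟨y, hy⟩
            simp only [CompactlySupportedContinuousMap.coe_zero, Pi.zero_apply] at this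
            linarith)
        linarith
      · have := hs (t⁻¹ • φ) (t⁻¹ • ψ) (hφ.smul (by positivity)) (hψ.smul (by positivity))
          (fun x hx y hy ↦ by
            have := h ⟨x, hx⟩ ⟨y, hy⟩
            simp only [CompactlySupportedContinuousMap.coe_zero, Pi.zero_apply] at this
            simp only [Pi.smul_apply, smul_eq_mul]
            rw [← mul_sub, inv_mul_le_iff₀ ht]
            linarith)
        simp only [Pi.smul_apply, smul_eq_mul, integral_const_mul] at this
        rw [← mul_sub, inv_mul_le_iff₀ ht] at this
        linarith)
    (by
      intro f
      obtain ⟨M, hM⟩ := (isCompact_range f.continuous).bddAbove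
      exact ⟨_, fun _ ↦ 0, fun _ ↦ M, 0, memU_const hconv 0, memU_const hconv M, le_rfl,
        fun x y ↦ by simpa using hM (mem_range_self (x, y)), le_rfl⟩)
    (fun f hf ↦ ⟨fun _ ↦ 0, fun _ ↦ 0, 0, memU_const hconv 0, memU_const hconv 0, le_rfl,
      fun x y ↦ by simpa using hf (x, y), by simp⟩)
  have hm : Measurable (Prod.map Subtype.val Subtype.val : X × X → _) :=
    measurable_subtype_coe.prodMap measurable_subtype_coe
  let Γ : Measure ((Fin n → ℝ) × (Fin n → ℝ)) := γ.map (Prod.map Subtype.val Subtype.val)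
  have hΓ : Γ (X ×ˢ X)ᶜ = 0 := by
    rw [Measure.map_apply hm (hX.prod hX).measurableSet.compl]
    convert measure_empty (μ := γ)
    ext p
    simp
  obtain ⟨h₁, h₂⟩ := map_fst_snd_compl_eq_zero hX.measurableSet hΓ
  have hfst {v : (Fin n → ℝ) → ℝ} (hv : memU X v) :
      ∫ x, v x ∂(Γ.map Prod.fst) = ∫ p, v p.1 ∂γ := by
    have hi := (hv.1.integrable_of_measure_compl_eq_zero hX h₁).aestronglyMeasurable
    rw [integral_map measurable_fst.aemeasurable hi]
    exact integral_map hm.aemeasurable (hi.comp_measurable measurable_fst)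
  have hsnd {v : (Fin n → ℝ) → ℝ} (hv : memU X v) :
      ∫ x, v x ∂(Γ.map Prod.snd) = ∫ p, v p.2 ∂γ := by
    have hi := (hv.1.integrable_of_measure_compl_eq_zero hX h₂).aestronglyMeasurable
    rw [integral_map measurable_snd.aemeasurable hi]
    exact integral_map hm.aemeasurable (hi.comp_measurable measurable_snd)
  have hγ' {f : X × X → ℝ} (hf : Continuous f) {r : ℝ}
      (h : (CompactlySupportedContinuousMap.continuousMapEquiv ⟨f, hf⟩, r) ∈
        majorantCone hX hconv hμ hν s) : ∫ p, f p ∂γ ≤ r := hγ _ _ h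
  refine ⟨Γ, inferInstance, hΓ, fun v hv ↦ ?_, fun v hv ↦ ?_, ?_⟩
  · rw [hfst hv, ← neg_le_neg_iff, ← integral_neg]
    refine hγ' ((continuousOn_iff_continuous_domRestrict.1 hv.1).comp continuous_fst).neg
      ⟨v, fun _ ↦ 0, 0, hv, memU_const hconv 0, le_rfl, fun x y ↦ ?_, by simp⟩
    simp
  · rw [hsnd hv]
    refine hγ' ((continuousOn_iff_continuous_domRestrict.1 hv.1).comp continuous_snd)
      ⟨fun _ ↦ 0, v, 0, memU_const hconv 0, hv, le_rfl, fun x y ↦ ?_, by simp⟩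
    simp
  · rw [integral_map hm.aemeasurable continuous_l1dist.aestronglyMeasurable]
    refine hγ' (continuous_l1dist.comp
        (continuous_subtype_val.prodMap continuous_subtype_val))
      ⟨fun _ ↦ 0, fun _ ↦ 0, 1, memU_const hconv 0, memU_const hconv 0, zero_le_one,
        fun x y ↦ ?_, by simp⟩
    simp

/-- **Fenchel–Rockafellar duality step.** For a compact convex `X ⊆ ℝⁿ` and a finite signed
Borel measure `μ` on `X` with `μ(X) = 0` and Jordan decomposition `μ = μp − μn`, the infimum
of the transport cost over finite nonnegative `γ` on `X × X` with `γ₁ ≽_cvx μ₊` and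
`γ₂ ≼_cvx μ₋` equals the supremum of `∫ φ dμ₊ − ∫ ψ dμ₋` over pairs `φ, ψ ∈ 𝒰(X)` with
`φ(x) − ψ(y) ≤ ‖x − y‖₁`; moreover the infimum is achieved. -/
theorem fenchel_rockafellar_step {n : ℕ} (X : Set (Fin n → ℝ))
    (hXcomp : IsCompact X) (hXconv : Convex ℝ X)
    (μp μn : Measure (Fin n → ℝ)) [IsFiniteMeasure μp] [IsFiniteMeasure μn]
    (hμp : μp Xᶜ = 0) (hμn : μn Xᶜ = 0) (hjordan : μp.MutuallySingular μn)
    (hzero : μp Set.univ = μn Set.univ) :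
    let D : Set ℝ := {r | ∃ γ : Measure ((Fin n → ℝ) × (Fin n → ℝ)), IsFiniteMeasure γ ∧
        γ ((X ×ˢ X)ᶜ) = 0 ∧
        (∀ v : (Fin n → ℝ) → ℝ, memU X v → (∫ x, v x ∂μp) ≤ ∫ x, v x ∂(γ.map Prod.fst)) ∧
        (∀ v : (Fin n → ℝ) → ℝ, memU X v → (∫ x, v x ∂(γ.map Prod.snd)) ≤ ∫ x, v x ∂μn) ∧
        r = ∫ p, l1dist p.1 p.2 ∂γ}
    let P : Set ℝ := {r | ∃ φ ψ : (Fin n → ℝ) → ℝ, memU X φ ∧ memU X ψ ∧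
        (∀ x ∈ X, ∀ y ∈ X, φ x - ψ y ≤ l1dist x y) ∧
        r = (∫ x, φ x ∂μp) - (∫ x, ψ x ∂μn)}
    sInf D = sSup P ∧ sInf D ∈ D := by
  intro D P
  have hP_bdd : BddAbove P := by
    obtain ⟨C, hC⟩ := ((hXcomp.prod hXcomp).image continuous_l1dist).bddAbove
    refine ⟨C * μp.real univ, ?_⟩
    rintro _ ⟨φ, ψ, hφ, hψ, h, rfl⟩
    exact integral_sub_integral_le_of_sub_le hXcomp hμp hμn hzero hφ.1 hψ.1
      fun x hx y hy ↦ (h x hx y hy).trans (hC ⟨(x, y), ⟨hx, hy⟩, rfl⟩)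
  have hP_ne : P.Nonempty := ⟨_, fun _ ↦ 0, fun _ ↦ 0, memU_const hXconv 0, memU_const hXconv 0,
    fun x _ y _ ↦ by
      rw [sub_zero]
      exact Finset.sum_nonneg fun i _ ↦ abs_nonneg _, rfl⟩
  have hweak : ∀ d ∈ D, sSup P ≤ d := by
    rintro _ ⟨γ, hγfin, hγ, h₁, h₂, rfl⟩
    refine csSup_le hP_ne ?_
    rintro _ ⟨φ, ψ, hφ, hψ, h, rfl⟩
    have := integral_sub_integral_le_cost hXcomp hγ hφ.1 hψ.1 h
    linarith [h₁ φ hφ, h₂ ψ hψ]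
  obtain ⟨γ, hγfin, hγ, h₁, h₂, hcost⟩ := exists_coupling_cost_le hXcomp hXconv hμp hμn hzero
    (s := sSup P) fun φ ψ hφ hψ h ↦ le_csSup hP_bdd ⟨φ, ψ, hφ, hψ, h, rfl⟩
  have hmem : ∫ p, l1dist p.1 p.2 ∂γ ∈ D := ⟨γ, hγfin, hγ, h₁, h₂, rfl⟩
  rw [hcost.antisymm (hweak _ hmem)] at hmem
  have hleast : IsLeast D (sSup P) := ⟨hmem, hweak⟩
  rw [hleast.csInf_eq]
  exact ⟨rfl, hmem⟩
end

section
/- From two convex potentials to one: Let X = ∏_{i=1}^n [aᵢ, bᵢ] ⊂ ℝⁿ be a compact box with 0 ≤ aᵢ < bᵢ for each i, and let μ be a finite signed Borel measure on X with μ(X) = 0 and Jordan decomposition μ = μ₊ − μ₋. Then sup over pairs φ, ψ ∈ 𝒰(X) satisfying φ(x) − ψ(y) ≤ ‖x − y‖₁ for all x, y ∈ X of (∫_X φ dμ₊ − ∫_X ψ dμ₋) equals sup over u ∈ 𝒰(X) ∩ ℒ₁(X) of (∫_X u dμ₊ − ∫_X u dμ₋); moreover if the supremum of one side is achieved then so is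 the supremum of the other side. -/
open MeasureTheory Set

theorem l1dist_self {n : ℕ} (x : Fin n → ℝ) : l1dist x x = 0 := by
  simp [l1dist]

theorem l1dist_triangle {n : ℕ} (x y z : Fin n → ℝ) :
    l1dist x z ≤ l1dist x y + l1dist y z := by
  unfold l1dist
  rw [← Finset.sum_add_distrib]
  exact Finset.sum_le_sum fun i _ => abs_sub_le _ _ _

theorem l1dist_comm {n : ℕ} (x y : Fin n → ℝ) : l1dist x y = l1dist y x := by
  simp only [l1dist, abs_sub_comm]

theorem l1dist_convex_comb_le {n : ℕ} (x y z w : Fin n → ℝ) {s t : ℝ} (hs : 0 ≤ s)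
    (ht : 0 ≤ t) :
    l1dist (s • x + t • y) (s • z + t • w) ≤ s * l1dist x z + t * l1dist y w := by
  unfold l1dist
  rw [Finset.mul_sum, Finset.mul_sum, ← Finset.sum_add_distrib]
  refine Finset.sum_le_sum fun i _ => ?_
  calc |(s • x + t • y) i - (s • z + t • w) i|
      = |s * (x i - z i) + t * (y i - w i)| := by
        congr 1
        simp only [Pi.add_apply, Pi.smul_apply, smul_eq_mul]
        ring
    _ ≤ |s * (x i - z i)| + |t * (y i - w i)| := abs_add_le _ _
    _ = s * |x i - z i| + t * |y i - w i| := by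
        rw [abs_mul, abs_mul, abs_of_nonneg hs, abs_of_nonneg ht]

theorem box_eq_Icc {n : ℕ} (a b : Fin n → ℝ) : box a b = Set.Icc a b := by
  ext x
  simp only [box, Set.mem_ofPred_eq, Set.mem_Icc, Pi.le_def, forall_and]

theorem memL1.continuousOn {n : ℕ} {X : Set (Fin n → ℝ)} {u : (Fin n → ℝ) → ℝ}
    (hu : memL1 X u) : ContinuousOn u X := by
  intro x hx
  have hlim : Filter.Tendsto (fun y => l1dist y x) (nhdsWithin x X) (nhds 0) := by
    have hcont : Continuous fun y => l1dist y x := by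
      unfold l1dist
      fun_prop
    have := hcont.continuousWithinAt (s := X) (x := x)
    rwa [ContinuousWithinAt, l1dist_self] at this
  refine tendsto_iff_dist_tendsto_zero.2 (squeeze_zero' (.of_forall fun _ => dist_nonneg) ?_ hlim)
  filter_upwards [self_mem_nhdsWithin] with y hy
  rw [Real.dist_eq, abs_le]
  have hxy := hu x hx y hy
  rw [l1dist_comm] at hxy
  exact ⟨by linarith, hu y hy x hx⟩

/-- The infimal convolution over `X` of `ψ` with the ℓ¹ norm. -/
noncomputable def l1InfConv {n : ℕ} (X : Set (Fin n → ℝ)) (ψ : (Fin n → ℝ) → ℝ)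
    (x : Fin n → ℝ) : ℝ :=
  ⨅ y : X, (ψ y + l1dist x y)

section InfConv

variable {n : ℕ} {X : Set (Fin n → ℝ)} {φ ψ : (Fin n → ℝ) → ℝ}

theorem le_l1InfConv (h : ∀ x ∈ X, ∀ y ∈ X, φ x - ψ y ≤ l1dist x y) {x : Fin n → ℝ}
    (hx : x ∈ X) : φ x ≤ l1InfConv X ψ x := by
  have : Nonempty X := ⟨⟨x, hx⟩⟩
  refine le_ciInf fun y => ?_
  linarith [h x hx y y.2]

theorem l1InfConv_le (h : ∀ x ∈ X, ∀ y ∈ X, φ x - ψ y ≤ l1dist x y) {x y : Fin n → ℝ}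
    (hx : x ∈ X) (hy : y ∈ X) : l1InfConv X ψ x ≤ ψ y + l1dist x y := by
  refine ciInf_le (f := fun y : X => ψ y + l1dist x y) ⟨φ x, ?_⟩ ⟨y, hy⟩
  rintro _ ⟨z, rfl⟩
  linarith [h x hx z z.2]

theorem memL1_l1InfConv (h : ∀ x ∈ X, ∀ y ∈ X, φ x - ψ y ≤ l1dist x y) :
    memL1 X (l1InfConv X ψ) := by
  intro x hx y hy
  have : Nonempty X := ⟨⟨x, hx⟩⟩
  suffices l1InfConv X ψ x - l1dist x y ≤ l1InfConv X ψ y by linarith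
  refine le_ciInf fun z => ?_
  linarith [l1InfConv_le h hx z.2, l1dist_triangle x y z]

theorem convexOn_l1InfConv (h : ∀ x ∈ X, ∀ y ∈ X, φ x - ψ y ≤ l1dist x y)
    (hψ : ConvexOn ℝ X ψ) : ConvexOn ℝ X (l1InfConv X ψ) := by
  refine ⟨hψ.1, fun x hx y hy s t hs ht hst => le_of_forall_pos_le_add fun ε hε => ?_⟩
  have : Nonempty X := ⟨⟨x, hx⟩⟩
  obtain ⟨z, hz⟩ := exists_lt_of_ciInf_lt (lt_add_of_pos_right (l1InfConv X ψ x) hε)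
  obtain ⟨w, hw⟩ := exists_lt_of_ciInf_lt (lt_add_of_pos_right (l1InfConv X ψ y) hε)
  have hinf := l1InfConv_le h (hψ.1 hx hy hs ht hst) (hψ.1 z.2 w.2 hs ht hst)
  have hconv := hψ.2 z.2 w.2 hs ht hst
  have hdist := l1dist_convex_comb_le x y z w hs ht
  simp only [smul_eq_mul] at hconv ⊢
  have hsz := mul_le_mul_of_nonneg_left hz.le hs
  have htw := mul_le_mul_of_nonneg_left hw.le ht
  have hε' : s * ε + t * ε = ε := by rw [← add_mul, hst, one_mul]
  linarith

theorem l1InfConv_mono {a b : Fin n → ℝ}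
    (h : ∀ x ∈ box a b, ∀ y ∈ box a b, φ x - ψ y ≤ l1dist x y)
    (hψ : ∀ x ∈ box a b, ∀ y ∈ box a b, (∀ i, x i ≤ y i) → ψ x ≤ ψ y)
    {x y : Fin n → ℝ} (hx : x ∈ box a b) (hxy : ∀ i, x i ≤ y i) :
    l1InfConv (box a b) ψ x ≤ l1InfConv (box a b) ψ y := by
  have : Nonempty (box a b) := ⟨⟨x, hx⟩⟩
  refine le_ciInf fun z => ?_
  have hmem : x ⊓ z.1 ∈ box a b := fun i =>
    ⟨le_inf (hx i).1 (z.2 i).1, inf_le_left.trans (hx i).2⟩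
  have hdist : l1dist x (x ⊓ z.1) ≤ l1dist y z := by
    refine Finset.sum_le_sum fun i _ => ?_
    simp only [Pi.inf_apply]
    have hi := hxy i
    rcases le_total (x i) (z.1 i) with hz | hz
    · simp [inf_eq_left.2 hz]
    · rw [inf_eq_right.2 hz, abs_of_nonneg (by linarith), abs_of_nonneg (by linarith)]
      linarith
  linarith [l1InfConv_le h hx hmem, hψ _ hmem z z.2 fun i => inf_le_right]

theorem memU_l1InfConv {a b : Fin n → ℝ}
    (h : ∀ x ∈ box a b, ∀ y ∈ box a b, φ x - ψ y ≤ l1dist x y) (hψ : memU (box a b) ψ) :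
    memU (box a b) (l1InfConv (box a b) ψ) :=
  ⟨(memL1_l1InfConv h).continuousOn, fun _ hx _ _ hxy => l1InfConv_mono h hψ.2.1 hx hxy,
    convexOn_l1InfConv h hψ.2.2⟩

end InfConv

theorem integrable_of_continuousOn_box {n : ℕ} {a b : Fin n → ℝ} {μ : Measure (Fin n → ℝ)}
    [IsFiniteMeasure μ] (hμ : μ (box a b)ᶜ = 0) {u : (Fin n → ℝ) → ℝ}
    (hu : ContinuousOn u (box a b)) : Integrable u μ := by
  rw [box_eq_Icc] at hμ hu
  have hint : IntegrableOn u (Set.Icc a b) μ := hu.integrableOn_compact isCompact_Icc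
  have hae : ∀ᵐ x ∂μ, x ∈ Set.Icc a b := mem_ae_iff.2 hμ
  rwa [IntegrableOn, Measure.restrict_eq_self_of_ae_mem hae] at hint

theorem integral_le_of_forall_mem_box {n : ℕ} {a b : Fin n → ℝ} {μ : Measure (Fin n → ℝ)}
    [IsFiniteMeasure μ] (hμ : μ (box a b)ᶜ = 0) {u v : (Fin n → ℝ) → ℝ}
    (hu : ContinuousOn u (box a b)) (hv : ContinuousOn v (box a b))
    (huv : ∀ x ∈ box a b, u x ≤ v x) : ∫ x, u x ∂μ ≤ ∫ x, v x ∂μ := by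
  refine integral_mono_ae (integrable_of_continuousOn_box hμ hu)
    (integrable_of_continuousOn_box hμ hv) ?_
  filter_upwards [mem_ae_iff.2 hμ] with x hx using huv x hx

/-- A cofinal subset containing `0` has the same supremum, attained in both sets or in neither
(the element `0` covers the unbounded case, where `sSup` is `0`). -/
theorem Real.sSup_eq_and_mem_iff_of_cofinal {S T : Set ℝ} (hTS : T ⊆ S)
    (hcof : ∀ r ∈ S, ∃ s ∈ T, r ≤ s) (h0 : (0 : ℝ) ∈ T) :
    sSup S = sSup T ∧ (sSup S ∈ S ↔ sSup T ∈ T) := by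
  by_cases hT : BddAbove T
  · have hle : ∀ r ∈ S, r ≤ sSup T := fun r hr => by
      obtain ⟨s, hs, hrs⟩ := hcof r hr
      exact hrs.trans (le_csSup hT hs)
    have heq : sSup S = sSup T :=
      le_antisymm (csSup_le ⟨0, hTS h0⟩ hle) (csSup_le_csSup ⟨_, hle⟩ ⟨0, h0⟩ hTS)
    refine ⟨heq, fun hS => ?_, fun hmem => heq ▸ hTS hmem⟩
    obtain ⟨s, hs, hle'⟩ := hcof _ hS
    rwa [le_antisymm (heq ▸ hle') (le_csSup hT hs)]
  · have hS : ¬ BddAbove S := fun hS => hT (hS.mono hTS)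
    rw [Real.sSup_of_not_bddAbove hT, Real.sSup_of_not_bddAbove hS]
    exact ⟨rfl, fun _ => h0, fun _ => hTS h0⟩

/-- **From two convex potentials to one.** For the box `X` and a finite signed Borel measure
`μ` on `X` with `μ(X) = 0` and Jordan decomposition `μ = μp − μn`, the supremum of
`∫ φ dμ₊ − ∫ ψ dμ₋` over pairs `φ, ψ ∈ 𝒰(X)` with `φ(x) − ψ(y) ≤ ‖x − y‖₁` equals the
supremum of `∫ u dμ₊ − ∫ u dμ₋` over `u ∈ 𝒰(X) ∩ ℒ₁(X)`; and one supremum is achieved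
iff the other is. -/
theorem two_potentials_to_one {n : ℕ} (a b : Fin n → ℝ) (hab : ∀ i, 0 ≤ a i ∧ a i < b i)
    (μp μn : Measure (Fin n → ℝ)) [IsFiniteMeasure μp] [IsFiniteMeasure μn]
    (hμp : μp (box a b)ᶜ = 0) (hμn : μn (box a b)ᶜ = 0) (hjordan : μp.MutuallySingular μn)
    (hzero : μp Set.univ = μn Set.univ) :
    let X : Set (Fin n → ℝ) := box a b
    let P2 : Set ℝ := {r | ∃ φ ψ : (Fin n → ℝ) → ℝ, memU X φ ∧ memU X ψ ∧
        (∀ x ∈ X, ∀ y ∈ X, φ x - ψ y ≤ l1dist x y) ∧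
        r = (∫ x, φ x ∂μp) - (∫ x, ψ x ∂μn)}
    let P1 : Set ℝ := {r | ∃ u : (Fin n → ℝ) → ℝ, memU X u ∧ memL1 X u ∧
        r = (∫ x, u x ∂μp) - (∫ x, u x ∂μn)}
    sSup P2 = sSup P1 ∧ (sSup P2 ∈ P2 ↔ sSup P1 ∈ P1) := by
  intro X P2 P1
  refine Real.sSup_eq_and_mem_iff_of_cofinal ?_ ?_ ?_
  · rintro r ⟨u, hu, hL, rfl⟩
    exact ⟨u, u, hu, hu, hL, rfl⟩
  · rintro r ⟨φ, ψ, hφ, hψ, h, rfl⟩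
    have hu : memU X (l1InfConv X ψ) := memU_l1InfConv h hψ
    refine ⟨_, ⟨l1InfConv X ψ, hu, memL1_l1InfConv h, rfl⟩, sub_le_sub ?_ ?_⟩
    · exact integral_le_of_forall_mem_box hμp hφ.1 hu.1 fun x hx => le_l1InfConv h hx
    · refine integral_le_of_forall_mem_box hμn hu.1 hψ.1 fun x hx => ?_
      simpa [l1dist_self] using l1InfConv_le h hx hx
  · refine ⟨fun _ => 0, ⟨continuousOn_const, fun _ _ _ _ _ => le_rfl, convexOn_const 0 ?_⟩,
      fun x _ y _ => ?_, by simp⟩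
    · simpa only [X, box_eq_Icc] using convex_Icc a b
    · simpa [l1dist] using Finset.sum_nonneg fun i _ => abs_nonneg (x i - y i)
end

section
/- The inf-convolution-type transform preserves feasibility: Let X = ∏_{i=1}^n [aᵢ, bᵢ] ⊂ ℝⁿ be a compact box with 0 ≤ aᵢ < bᵢ for each i, let φ ∈ 𝒰(X), and define ψ̄ : X → ℝ by ψ̄(y) = sup_{x ∈ X} (φ(x) − ‖x − y‖₁). Then ψ̄ is continuous, coordinatewise nondecreasing, convex, and 1-Lipschitz with respect to the ℓ¹ norm; that is, ψ̄ ∈ 𝒰(X) ∩ ℒ₁(X). -/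
open MeasureTheory Set

theorem l1dist_nonneg {n : ℕ} (x y : Fin n → ℝ) : 0 ≤ l1dist x y :=
  Finset.sum_nonneg fun _ _ => abs_nonneg _

/-- Raising `x` to `x ⊔ z` does not increase its distance to `z` beyond `‖x - y‖₁`, if `y ≤ z`. -/
theorem l1dist_sup_le {n : ℕ} {y z : Fin n → ℝ} (x : Fin n → ℝ) (hyz : y ≤ z) :
    l1dist (x ⊔ z) z ≤ l1dist x y := by
  refine Finset.sum_le_sum fun i _ => ?_
  have hi := hyz i
  rw [Pi.sup_apply]
  rcases le_total (x i) (z i) with h | h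
  · simp [sup_eq_right.2 h]
  · rw [sup_eq_left.2 h, abs_of_nonneg (sub_nonneg.2 h)]
    exact le_trans (by linarith) (le_abs_self _)

/-- A point of `[s y + t z, b]` is the same convex combination of points of `[y, b]` and `[z, b]`. -/
theorem exists_convex_combination_Icc {y z b x s t : ℝ} (hy : y ≤ b) (hz : z ≤ b)
    (hst : s + t = 1) (hx : x ∈ Set.Icc (s * y + t * z) b) :
    ∃ p ∈ Set.Icc y b, ∃ q ∈ Set.Icc z b, s * p + t * q = x := by
  have hb : s * b + t * b = b := by rw [← add_mul, hst, one_mul]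
  rw [← segment_eq_Icc (hx.1.trans hx.2)] at hx
  obtain ⟨c, d, hc, hd, hcd, rfl⟩ := hx
  refine ⟨c * y + d * b, ?_, c * z + d * b, ?_, ?_⟩
  · rw [← segment_eq_Icc hy]
    exact ⟨c, d, hc, hd, hcd, rfl⟩
  · rw [← segment_eq_Icc hz]
    exact ⟨c, d, hc, hd, hcd, rfl⟩
  · simp only [smul_eq_mul]
    linear_combination d * hb

/-- **The inf-convolution-type transform preserves feasibility.** For `φ ∈ 𝒰(X)` on the box
`X`, the function `ψ̄(y) = sup_{x ∈ X} (φ(x) − ‖x − y‖₁)` is continuous, coordinatewise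
nondecreasing, convex, and 1-Lipschitz w.r.t. the ℓ¹ norm; that is, `ψ̄ ∈ 𝒰(X) ∩ ℒ₁(X)`. -/
theorem transform_preserves_feasibility {n : ℕ} (a b : Fin n → ℝ)
    (hab : ∀ i, 0 ≤ a i ∧ a i < b i)
    (φ : (Fin n → ℝ) → ℝ) (hφ : memU (box a b) φ) :
    memU (box a b) (fun y => sSup ((fun x => φ x - l1dist x y) '' box a b)) ∧
    memL1 (box a b) (fun y => sSup ((fun x => φ x - l1dist x y) '' box a b)) := by
  obtain ⟨-, hmono, hconv⟩ := hφ
  have hle : a ≤ b := fun i => (hab i).2.le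
  rw [box_eq_Icc] at *
  have hne : (Set.Icc a b).Nonempty := Set.nonempty_Icc.2 hle
  have hbdd : ∀ y, BddAbove ((fun x => φ x - l1dist x y) '' Set.Icc a b) := by
    rintro y
    refine ⟨φ b, ?_⟩
    rintro _ ⟨x, hx, rfl⟩
    have h₁ := hmono x hx b (Set.right_mem_Icc.2 hle) hx.2
    have h₂ := l1dist_nonneg x y
    dsimp only
    linarith
  have hge : ∀ y, ∀ x ∈ Set.Icc a b,
      φ x - l1dist x y ≤ sSup ((fun x => φ x - l1dist x y) '' Set.Icc a b) :=
    fun y x hx => le_csSup (hbdd y) ⟨x, hx, rfl⟩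
  have hsSup_le : ∀ y c, (∀ x ∈ Set.Icc a b, φ x - l1dist x y ≤ c) →
      sSup ((fun x => φ x - l1dist x y) '' Set.Icc a b) ≤ c :=
    fun y c h => csSup_le (hne.image _) (Set.forall_mem_image.2 h)
  have hraise : ∀ x ∈ Set.Icc a b, ∀ y z, y ≤ z → z ∈ Set.Icc a b →
      x ⊔ z ∈ Set.Icc a b ∧ φ x - l1dist x y ≤ φ (x ⊔ z) - l1dist (x ⊔ z) z := by
    intro x hx y z hyz hz
    have hmem : x ⊔ z ∈ Set.Icc a b := ⟨hx.1.trans le_sup_left, sup_le hx.2 hz.2⟩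
    have h₁ := hmono x hx _ hmem (le_sup_left : x ≤ x ⊔ z)
    have h₂ := l1dist_sup_le x hyz
    exact ⟨hmem, by linarith⟩
  have hlip : memL1 (Set.Icc a b)
      (fun y => sSup ((fun x => φ x - l1dist x y) '' Set.Icc a b)) := by
    intro y _ z _
    rw [sub_le_iff_le_add]
    refine hsSup_le y _ fun x hx => ?_
    have h₁ := hge z x hx
    have h₂ := l1dist_triangle x y z
    linarith
  refine ⟨⟨hlip.continuousOn, ?_, convex_Icc a b, ?_⟩, hlip⟩
  · intro y _ z hz hyz
    refine hsSup_le y _ fun x hx => ?_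
    obtain ⟨hmem, h⟩ := hraise x hx y z hyz hz
    exact h.trans (hge z _ hmem)
  · intro y hy z hz s t hs ht hst
    refine hsSup_le _ _ fun x hx => ?_
    have hw := convex_Icc a b hy hz hs ht hst
    obtain ⟨hmem, h⟩ := hraise x hx _ _ le_rfl hw
    refine h.trans ?_
    have hsup : s • y + t • z ≤ x ⊔ (s • y + t • z) := le_sup_right
    generalize x ⊔ (s • y + t • z) = v at hmem hsup
    choose p hp q hq hpq using fun i =>
      exists_convex_combination_Icc (hy.2 i) (hz.2 i) hst ⟨hsup i, hmem.2 i⟩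
    have hpmem : p ∈ Set.Icc a b :=
      ⟨fun i => (hy.1 i).trans (hp i).1, fun i => (hp i).2⟩
    have hqmem : q ∈ Set.Icc a b :=
      ⟨fun i => (hz.1 i).trans (hq i).1, fun i => (hq i).2⟩
    obtain rfl : s • p + t • q = v := funext hpq
    have hdist : l1dist (s • p + t • q) (s • y + t • z) = s * l1dist p y + t * l1dist q z := by
      unfold l1dist
      rw [Finset.mul_sum, Finset.mul_sum, ← Finset.sum_add_distrib]
      refine Finset.sum_congr rfl fun i _ => ?_
      rw [abs_of_nonneg (sub_nonneg.2 (hsup i)), abs_of_nonneg (sub_nonneg.2 (hp i).1),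
        abs_of_nonneg (sub_nonneg.2 (hq i).1)]
      simp only [Pi.add_apply, Pi.smul_apply, smul_eq_mul]
      ring
    have h₁ := hconv.2 hpmem hqmem hs ht hst
    have h₂ := mul_le_mul_of_nonneg_left (hge y p hpmem) hs
    have h₃ := mul_le_mul_of_nonneg_left (hge z q hqmem) ht
    simp only [smul_eq_mul] at h₁ ⊢
    rw [hdist]
    linarith
end

section
/- Grand bundling is optimal for shifted uniform items: For every integer n ≥ 1 there exists c₀ ≥ 0 such that for all c ≥ c₀ the following holds on the type space X = [c, c+1]ⁿ: there exists a price p such that for every IC and IR mechanism (𝒫, 𝒯) on X with 𝒯 Lebesgue-integrable, ∫_X 𝒯(x) dx ≤ ∫_X 𝒯_p(x) dx, where (𝒫_p, 𝒯_p) is the grand-bundling mechanism at price p. That is, a take-it-or-leave-it offer of the grand bundle maximizes expected revenue when the n item values are independent and uniform on [c, c+1]. -/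
open MeasureTheory Set

/-- Dot product on `Fin n → ℝ`. -/
noncomputable def dotp {n : ℕ} (p x : Fin n → ℝ) : ℝ := ∑ i, p i * x i

section Bundling

open scoped unitInterval

section Exchange
variable {ι : Type*}

/-- Swap the coordinates selected by `S` between two points. -/
def exchange (S : ι → Prop) [DecidablePred S] (w : (ι → I) × (ι → I)) : (ι → I) × (ι → I) :=
  (fun j => if S j then w.2 j else w.1 j, fun j => if S j then w.1 j else w.2 j)

lemma measurePreserving_exchange [Fintype ι] (S : ι → Prop) [DecidablePred S] :
    MeasurePreserving (exchange S) := by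
  have h1 := volume_measurePreserving_arrowProdEquivProdArrow I I ι
  have h2 : MeasurePreserving
      (fun (w : ι → I × I) j => if S j then (w j).swap else w j) := by
    refine volume_preserving_pi
      (f := fun j (z : I × I) => if S j then z.swap else z) (fun j => ?_)
    by_cases hj : S j
    · simp only [hj, if_true]
      exact Measure.measurePreserving_swap
    · simp only [hj, if_false]
      exact MeasurePreserving.id _
  have h3 := (h1.comp h2).comp h1.symm
  convert h3 using 1
  funext w
  ext j
  · by_cases hj : S j <;> simp [exchange, hj, MeasurableEquiv.arrowProdEquivProdArrow,
      Equiv.arrowProdEquivProdArrow]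
  · by_cases hj : S j <;> simp [exchange, hj, MeasurableEquiv.arrowProdEquivProdArrow,
      Equiv.arrowProdEquivProdArrow]

lemma integral_exchange [Fintype ι] (S : ι → Prop) [DecidablePred S]
    {G : (ι → I) × (ι → I) → ℝ} (hG : Measurable G) :
    ∫ w, G (exchange S w) = ∫ w, G w := by
  have h := measurePreserving_exchange S
  rw [← h.map_eq, integral_map h.measurable.aemeasurable hG.aestronglyMeasurable, h.map_eq]

lemma integrable_of_abs_le {α : Type*} [MeasureSpace α] [IsFiniteMeasure (volume : Measure α)]
    {G : α → ℝ} (hG : Measurable G) {K : ℝ} (hK : ∀ x, |G x| ≤ K) : Integrable G :=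
  Integrable.of_bound hG.aestronglyMeasurable K (Filter.Eventually.of_forall hK)

/-- Resampling one coordinate does not change the expectation. -/
lemma integral_resample [Fintype ι] [DecidableEq ι] (i : ι) {G : (ι → I) → ℝ} (hG : Measurable G)
    {K : ℝ} (hK : ∀ x, |G x| ≤ K) :
    ∫ y, G y = ∫ y, ∫ t : I, G (Function.update y i t) := by
  have hev : MeasurePreserving (fun v : ι → I => v i) := measurePreserving_eval _ i
  have hup : ∀ y : ι → I, Measurable fun t : I => G (Function.update y i t) := fun y =>
    hG.comp (measurable_update y)
  have h1 : ∀ y : ι → I, ∫ t : I, G (Function.update y i t)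
      = ∫ v : ι → I, G (Function.update y i (v i)) := fun y => by
    rw [← hev.map_eq, integral_map hev.measurable.aemeasurable (hup y).aestronglyMeasurable]
  have hm : Measurable fun w : (ι → I) × (ι → I) => G (exchange (fun j => j = i) w).1 :=
    hG.comp (measurable_fst.comp (measurePreserving_exchange _).measurable)
  have h2 : ∀ w : (ι → I) × (ι → I), G (Function.update w.1 i (w.2 i))
      = G (exchange (fun j => j = i) w).1 := fun w => by
    congr 1; funext j; by_cases hj : j = i
    · subst hj; simp [exchange]
    · simp [exchange, hj]
  simp_rw [h1]
  have hineq : Integrable (fun w : (ι → I) × (ι → I) => G (exchange (fun j => j = i) w).1)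
      (volume.prod volume) := integrable_of_abs_le hm (fun w => hK _)
  have h3 := integral_prod _ hineq
  simp_rw [← h2] at h3
  rw [← h3]
  simp_rw [h2]
  change _ = ∫ w : (ι → I) × (ι → I), _
  rw [integral_exchange (fun j => j = i) (G := fun w => G w.1) (hG.comp measurable_fst)]
  have h4 := integral_fun_fst (μ := (volume : Measure (ι → I)))
    (ν := (volume : Measure (ι → I))) G
  simp at h4
  exact h4.symm

end Exchange

lemma integral_unitInterval_eq (F : I → ℝ) :
    ∫ t : I, F t = ∫ t in (0:ℝ)..1, F (projIcc 0 1 zero_le_one t) := by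
  rw [intervalIntegral.integral_of_le zero_le_one, ← integral_Icc_eq_integral_Ioc,
    ← integral_subtype_comap measurableSet_Icc]
  refine integral_congr_ae (Filter.Eventually.of_forall fun t => ?_)
  simp [projIcc_val]

/-- Integration by parts against a subgradient of a function of one variable. -/
lemma integral_add_mul_subgradient (c : ℝ) {g q : I → ℝ} (hq : ∀ t, q t ∈ Icc (0:ℝ) 1)
    (h : ∀ s t : I, g t + ((s:ℝ) - t) * q t ≤ g s) :
    ∫ t : I, (c + t) * q t = (c + 1) * g 1 - c * g 0 - ∫ t : I, g t := by
  have hlip : ∀ s t : I, |g s - g t| ≤ |(s:ℝ) - t| := fun s t => by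
    have h1 := h s t
    have h2 := h t s
    obtain ⟨a0, a1⟩ := hq s
    obtain ⟨b0, b1⟩ := hq t
    rcases le_total (s:ℝ) t with hst | hst
    · rw [abs_of_nonpos (by linarith : (s:ℝ) - t ≤ 0), abs_le]
      constructor <;> nlinarith
    · rw [abs_of_nonneg (by linarith : 0 ≤ (s:ℝ) - t), abs_le]
      constructor <;> nlinarith
  have hgc : Continuous g := by
    have : LipschitzWith 1 g := LipschitzWith.of_dist_le_mul fun s t => by
      simpa [Real.dist_eq, Subtype.dist_eq] using hlip s t
    exact this.continuous
  have hmono : Monotone q := fun s t hst => by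
    rcases eq_or_lt_of_le hst with rfl | hlt
    · exact le_rfl
    · have h1 := h s t
      have h2 := h t s
      have : (s:ℝ) < t := hlt
      by_contra hcon
      push Not at hcon
      nlinarith
  set π : ℝ → I := projIcc 0 1 zero_le_one with hπ
  have hπc : Continuous π := continuous_projIcc
  have hQ : Monotone (fun t => q (π t)) := hmono.comp (monotone_projIcc _)
  have hπv : ∀ x ∈ Ioo (0:ℝ) 1, ((π x : I) : ℝ) = x := fun x hx => by
    simp [hπ, projIcc_of_mem _ (Ioo_subset_Icc_self hx)]
  have hderiv : ∀ x ∈ Ioo (0:ℝ) 1 \ {x | ¬ ContinuousAt (fun t => q (π t)) x},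
      HasDerivAt (fun t => (c + t) * g (π t)) (g (π x) + (c + x) * q (π x)) x := by
    rintro x ⟨hx, hcx⟩
    simp only [mem_ofPred_eq, not_not] at hcx
    have hg : HasDerivAt (fun t => g (π t)) (q (π x)) x := by
      rw [hasDerivAt_iff_isLittleO, Asymptotics.isLittleO_iff]
      intro ε hε
      have hev := (Metric.continuousAt_iff'.1 hcx ε hε)
      filter_upwards [hev, Ioo_mem_nhds hx.1 hx.2] with y hy hyI
      have h1 := h (π y) (π x)
      have h2 := h (π x) (π y)
      rw [hπv x hx, hπv y hyI] at h1 h2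
      rw [Real.dist_eq] at hy
      rw [Real.norm_eq_abs, Real.norm_eq_abs, smul_eq_mul]
      have h3 : 0 ≤ g (π y) - g (π x) - (y - x) * q (π x) := by linarith
      rw [abs_of_nonneg h3]
      calc _ ≤ (q (π y) - q (π x)) * (y - x) := by linarith
        _ ≤ |(q (π y) - q (π x)) * (y - x)| := le_abs_self _
        _ ≤ ε * |y - x| := by rw [abs_mul]; gcongr
    have := ((hasDerivAt_id x).const_add c).mul hg
    rw [one_mul] at this
    exact this
  have hI1 : IntervalIntegrable (fun t => g (π t)) volume 0 1 :=
    (hgc.comp hπc).intervalIntegrable _ _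
  have hI2 : IntervalIntegrable (fun t => (c + t) * q (π t)) volume 0 1 :=
    hQ.intervalIntegrable.continuousOn_mul (by fun_prop)
  have key := integral_eq_of_hasDerivAt_off_countable_of_le
    (fun t => (c + t) * g (π t)) (fun x => g (π x) + (c + x) * q (π x)) zero_le_one
    hQ.countable_not_continuousAt (by fun_prop) hderiv (hI1.add hI2)
  rw [intervalIntegral.integral_add hI1 hI2] at key
  have e0 : π 0 = 0 := projIcc_left _
  have e1 : π 1 = 1 := projIcc_right _
  rw [e0, e1] at key
  rw [integral_unitInterval_eq, integral_unitInterval_eq]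
  have e2 : ∫ t in (0:ℝ)..1, (c + (π t : ℝ)) * q (π t) = ∫ t in (0:ℝ)..1, (c + t) * q (π t) := by
    refine intervalIntegral.integral_congr fun t ht => ?_
    rw [uIcc_of_le zero_le_one] at ht
    simp [hπ, projIcc_of_mem _ ht]
  rw [← hπ, e2]
  linarith

/-- Integrals over a shifted unit cube as expectations over `Iⁿ`. -/
lemma integral_box_eq {n : ℕ} (c : ℝ) (F : (Fin n → ℝ) → ℝ) :
    ∫ x in {x : Fin n → ℝ | ∀ i, x i ∈ Set.Icc c (c + 1)}, F x
      = ∫ y : Fin n → I, F (fun i => c + y i) := by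
  have h1 : MeasurePreserving (fun t : I => c + (t:ℝ)) volume
      (volume.restrict (Icc c (c + 1))) := by
    have hA : MeasurePreserving ((↑) : I → ℝ) volume (volume.restrict (Icc 0 1)) :=
      measurePreserving_subtype_coe measurableSet_Icc
    have hB := (measurePreserving_add_left (volume : Measure ℝ) c).restrict_preimage_emb
      (measurableEmbedding_addLeft c) (Icc c (c + 1))
    have : (fun x => c + x) ⁻¹' Icc c (c + 1) = Icc (0:ℝ) 1 := by
      ext x; simp
    rw [this] at hB
    exact hB.comp hA
  have h2 : MeasurePreserving (fun (y : Fin n → I) i => c + (y i : ℝ)) volume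
      (Measure.pi fun _ => volume.restrict (Icc c (c + 1))) :=
    measurePreserving_pi _ _ fun _ => h1
  have hemb : MeasurableEmbedding (fun (y : Fin n → I) i => c + (y i : ℝ)) := by
    refine Continuous.measurableEmbedding (by fun_prop) fun y z h => ?_
    ext i
    have := congrFun h i
    simpa using this
  rw [h2.integral_comp hemb F, ← Measure.restrict_pi_pi]
  congr 2
  ext x; simp [Pi.le_def, forall_and]

section Revenue
variable {n : ℕ}

/-- The revenue of a mechanism on `[c, c+1]ⁿ` as a function of its indirect utility `u`. -/
noncomputable def revenueFunctional (c : ℝ) (u : (Fin n → I) → ℝ) : ℝ :=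
  ∑ i, ((c + 1) * (∫ y, u (Function.update y i 1)) - c * ∫ y, u (Function.update y i 0))
    - (n + 1) * ∫ y, u y

lemma sub_mul_le_of_mem_Icc (a b : I) {q : ℝ} (hq : q ∈ Icc (0:ℝ) 1) :
    -1 ≤ ((a:ℝ) - b) * q := by
  obtain ⟨h0, h1⟩ := hq
  nlinarith [a.2.1, b.2.2]

lemma abs_le_of_subgradient {P : (Fin n → I) → Fin n → ℝ} {u : (Fin n → I) → ℝ}
    (hP : ∀ x i, P x i ∈ Icc (0:ℝ) 1)
    (hsub : ∀ x x', u x' + ∑ i, ((x i : ℝ) - x' i) * P x' i ≤ u x) (x : Fin n → I) :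
    |u x| ≤ |u 0| + n := by
  have hb : ∀ x x' : Fin n → I, -(n:ℝ) ≤ ∑ i, ((x i : ℝ) - x' i) * P x' i := fun x x' => by
    have := Finset.sum_le_sum (s := Finset.univ)
      fun i _ => sub_mul_le_of_mem_Icc (x i) (x' i) (hP x' i)
    simpa using this
  have h1 := hsub x 0
  have h2 := hsub 0 x
  have h3 := hb x 0
  have h4 := hb 0 x
  rw [abs_le]
  constructor
  · linarith [neg_abs_le (u 0)]
  · linarith [le_abs_self (u 0)]

lemma measurable_update_coord (i : Fin n) (t : I) :
    Measurable fun y : Fin n → I => Function.update y i t :=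
  measurable_pi_lambda _ fun j => by
    by_cases h : j = i
    · subst h; simp
    · simpa [h] using measurable_pi_apply j

lemma integral_revenue_eq (c : ℝ) {P : (Fin n → I) → Fin n → ℝ} {u : (Fin n → I) → ℝ}
    (hPm : Measurable P) (hum : Measurable u) (hP : ∀ x i, P x i ∈ Icc (0:ℝ) 1)
    (hsub : ∀ x x', u x' + ∑ i, ((x i : ℝ) - x' i) * P x' i ≤ u x) :
    ∫ x, (∑ i, (c + x i) * P x i - u x) = revenueFunctional c u := by
  have hub := abs_le_of_subgradient hP hsub
  set K := |u 0| + n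
  have hPi : ∀ i, Measurable fun x => P x i := fun i => (measurable_pi_apply i).comp hPm
  have hui : Integrable u := integrable_of_abs_le hum hub
  have huu : ∀ i t, Integrable fun y => u (Function.update y i t) := fun i t =>
    integrable_of_abs_le (hum.comp (measurable_update_coord i t)) fun _ => hub _
  have hqm : ∀ i, Measurable fun x : Fin n → I => (c + x i) * P x i := fun i =>
    ((measurable_subtype_coe.comp (measurable_pi_apply i)).const_add c).mul (hPi i)
  have hqb : ∀ i (x : Fin n → I), |(c + x i) * P x i| ≤ |c| + 1 := fun i x => by
    rw [abs_mul]
    have h1 : |c + (x i : ℝ)| ≤ |c| + 1 := (abs_add_le _ _).trans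
      (by gcongr; rw [abs_of_nonneg (x i).2.1]; exact (x i).2.2)
    have h2 : |P x i| ≤ 1 := abs_le.2 ⟨by linarith [(hP x i).1], (hP x i).2⟩
    calc _ ≤ (|c| + 1) * 1 := by gcongr
      _ = _ := mul_one _
  have hqi : ∀ i, Integrable fun x : Fin n → I => (c + x i) * P x i := fun i =>
    integrable_of_abs_le (hqm i) (hqb i)
  have hcoord : ∀ i, ∫ x : Fin n → I, (c + x i) * P x i
      = (c + 1) * (∫ y, u (Function.update y i 1)) - c * (∫ y, u (Function.update y i 0))
        - ∫ y, u y := fun i => by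
    rw [integral_resample i (hqm i) (hqb i)]
    have h1 : ∀ y : Fin n → I, ∫ t : I, (c + (Function.update y i t i : ℝ)) *
          P (Function.update y i t) i
        = (c + 1) * u (Function.update y i 1) - c * u (Function.update y i 0)
          - ∫ t : I, u (Function.update y i t) := fun y => by
      simp only [Function.update_self]
      refine integral_add_mul_subgradient c (g := fun t => u (Function.update y i t))
        (fun t => hP _ i) fun s t => ?_
      have := hsub (Function.update y i s) (Function.update y i t)
      rwa [Finset.sum_eq_single i (fun j _ hj => by simp [hj]) (by simp),
        Function.update_self, Function.update_self] at this
    simp_rw [h1]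
    have hmarg : Integrable fun y : Fin n → I => ∫ t : I, u (Function.update y i t) := by
      have hm : Measurable fun w : (Fin n → I) × I => u (Function.update w.1 i w.2) := by
        refine hum.comp (measurable_pi_lambda _ fun j => ?_)
        by_cases h : j = i
        · subst h; simpa using measurable_snd
        · simp only [Function.update_of_ne h]
          exact (measurable_pi_apply j).comp measurable_fst
      exact (integrable_of_abs_le (α := (Fin n → I) × I) hm fun _ => hub _).integral_prod_left
    have hfaces : Integrable fun y : Fin n → I =>
        (c + 1) * u (Function.update y i 1) - c * u (Function.update y i 0) :=
      ((huu i 1).const_mul _).sub ((huu i 0).const_mul _)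
    rw [integral_sub hfaces hmarg,
      integral_sub ((huu i 1).const_mul _) ((huu i 0).const_mul _), integral_const_mul,
      integral_const_mul, ← integral_resample i hum hub]
  rw [integral_sub (integrable_finsetSum _ fun i _ => hqi i) hui,
    integral_finsetSum _ fun i _ => hqi i, Finset.sum_congr rfl fun i _ => hcoord i,
    Finset.sum_sub_distrib, revenueFunctional]
  simp
  ring

end Revenue

section Chain

/-- The value of the grand bundle. -/
noncomputable def total {n : ℕ} (y : Fin n → I) : ℝ := ∑ j, (y j : ℝ)

lemma measurable_total {n : ℕ} : Measurable (total (n := n)) :=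
  Finset.measurable_sum _ fun j _ => measurable_subtype_coe.comp (measurable_pi_apply j)

lemma coe_le_total {n : ℕ} (y : Fin n → I) (j : Fin n) : (y j : ℝ) ≤ total y :=
  Finset.single_le_sum (f := fun j => (y j : ℝ)) (fun j _ => (y j).2.1) (Finset.mem_univ j)

/-- The increase of `f` across the cube in direction `i`, counted on the lines that start
outside the exclusion region `total < p`. -/
noncomputable def gain {n : ℕ} (f : (Fin n → I) → ℝ) (p : ℝ) (i : Fin n) (y : Fin n → I) : ℝ :=
  if total (Function.update y i 0) < p then 0
  else f (Function.update y i 1) - f (Function.update y i 0)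

lemma le_add_sum_of_step {N : ℕ} (a : Fin (N + 1) → ℝ) (g : Fin N → ℝ)
    (h : ∀ k : Fin N, a k.castSucc ≤ a k.succ + g k) : a 0 ≤ a (Fin.last N) + ∑ k, g k := by
  induction N with
  | zero => simp
  | succ N ih =>
    rw [Fin.sum_univ_castSucc]
    have h1 := ih (fun k => a k.castSucc) (fun k => g k.castSucc) fun k => h k.castSucc
    have h2 := h (Fin.last N)
    simp only [Fin.castSucc_zero, Fin.succ_last] at h1 h2
    linarith

/-- Starting from `U` with coordinate `τ 0` raised to `1`, replace the coordinates of `U` by those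
of `V` in the order given by `τ`, always keeping one coordinate at `1`. -/
lemma le_add_sum_gain {m : ℕ} {f : (Fin (m + 2) → I) → ℝ} (hf : Monotone f) {p : ℝ}
    (τ : Equiv.Perm (Fin (m + 2))) (U V : Fin (m + 2) → I)
    (hU : p ≤ U (τ (Fin.last (m + 1)))) :
    f (Function.update U (τ 0) 1) ≤ f (Function.update V (τ (Fin.last (m + 1))) 1)
      + ∑ k : Fin (m + 1), gain f p (τ k.castSucc)
          (exchange (fun j => τ.symm j < k.castSucc) (U, V)).1 := by
  set z : Fin (m + 2) → Fin (m + 2) → I := fun k => (exchange (fun j => τ.symm j < k) (U, V)).1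
    with hz
  have hzj : ∀ k j, z k j = if τ.symm j < k then V j else U j := fun k j => rfl
  have h0 : z 0 = U := by funext j; simp [hzj]
  have hlast : Function.update (z (Fin.last (m + 1))) (τ (Fin.last (m + 1))) 1
      = Function.update V (τ (Fin.last (m + 1))) 1 := by
    funext j
    by_cases hj : j = τ (Fin.last (m + 1))
    · subst hj; simp
    · have : τ.symm j ≠ Fin.last (m + 1) := fun h => hj (by rw [← h]; simp)
      simp [hj, hzj, Fin.lt_last_iff_ne_last.2 this]
  have key := le_add_sum_of_step (fun k => f (Function.update (z k) (τ k) 1))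
    (fun k => gain f p (τ k.castSucc) (z k.castSucc)) fun k => by
      have hne : τ (Fin.last (m + 1)) ≠ τ k.castSucc := fun h =>
        (Fin.castSucc_lt_last k).ne' (τ.injective h)
      have hsum : ¬ total (Function.update (z k.castSucc) (τ k.castSucc) 0) < p := by
        rw [not_lt]
        refine hU.trans (le_trans (le_of_eq ?_) (coe_le_total _ (τ (Fin.last (m + 1)))))
        rw [Function.update_of_ne hne, hzj, if_neg]
        simpa using Fin.le_last _
      have hle : f (Function.update (z k.castSucc) (τ k.castSucc) 0)
          ≤ f (Function.update (z k.succ) (τ k.succ) 1) := by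
        refine hf fun j => ?_
        by_cases h1 : j = τ k.castSucc
        · subst h1; simp
        · by_cases h2 : j = τ k.succ
          · subst h2
            rw [Function.update_self]
            exact unitInterval.le_one'
          · rw [Function.update_of_ne h1, Function.update_of_ne h2, hzj, hzj]
            have h3 : τ.symm j ≠ k.castSucc := fun h => h1 (by rw [← h]; simp)
            have h4 : τ.symm j < k.castSucc ↔ τ.symm j < k.succ := by
              rw [Fin.lt_def, Fin.lt_def]
              have : (τ.symm j : ℕ) ≠ k := fun h => h3 (Fin.ext h)
              simp; omega
            simp only [h4, le_refl]
      rw [gain, if_neg hsum]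
      linarith
  simp only [h0, hlast] at key
  exact key

/-- The weight that the exclusion region puts on the facet in direction `e`. -/
noncomputable def lowWeight {n : ℕ} (c p : ℝ) (e : Fin n) (y : Fin n → I) : ℝ :=
  c * (if total (Function.update y e 0) < p then 1 else 0)
    + (n + 1) / n * (if total y < p then 1 else 0)

variable {n : ℕ} {f : (Fin n → I) → ℝ} {p : ℝ}

lemma abs_le_of_monotone (hf : Monotone f) (y : Fin n → I) : |f y| ≤ |f 0| + |f 1| := by
  have h0 : f 0 ≤ f y := hf fun j => unitInterval.nonneg'
  have h1 : f y ≤ f 1 := hf fun j => unitInterval.le_one'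
  rw [abs_le]
  constructor
  · linarith [neg_abs_le (f 0), abs_nonneg (f 1)]
  · linarith [le_abs_self (f 1), abs_nonneg (f 0)]

lemma measurableSet_total_update_lt (i : Fin n) (p : ℝ) :
    MeasurableSet {y : Fin n → I | total (Function.update y i 0) < p} :=
  measurableSet_lt (measurable_total.comp (measurable_update_coord i 0)) measurable_const

lemma measurableSet_total_lt (p : ℝ) : MeasurableSet {y : Fin n → I | total y < p} :=
  measurableSet_lt measurable_total measurable_const

lemma measurable_gain (hfm : Measurable f) (i : Fin n) : Measurable (gain f p i) :=
  Measurable.ite (measurableSet_total_update_lt i p) measurable_const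
    ((hfm.comp (measurable_update_coord i 1)).sub (hfm.comp (measurable_update_coord i 0)))

lemma gain_nonneg (hf : Monotone f) (i : Fin n) (y : Fin n → I) : 0 ≤ gain f p i y := by
  rw [gain]
  split_ifs
  · exact le_rfl
  · exact sub_nonneg.2 (hf (update_le_update_iff.2
      ⟨unitInterval.nonneg', fun _ _ => le_rfl⟩))

lemma gain_le (hf : Monotone f) (i : Fin n) (y : Fin n → I) :
    gain f p i y ≤ 2 * (|f 0| + |f 1|) := by
  rw [gain]
  split_ifs
  · positivity
  · have h1 := abs_le.1 (abs_le_of_monotone hf (Function.update y i 1))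
    have h2 := abs_le.1 (abs_le_of_monotone hf (Function.update y i 0))
    linarith [h1.2, h2.1]

lemma measurable_lowWeight (c p : ℝ) (e : Fin n) : Measurable (lowWeight c p e) :=
  ((Measurable.ite (measurableSet_total_update_lt e p) measurable_const measurable_const).const_mul
    _).add ((Measurable.ite (measurableSet_total_lt p) measurable_const measurable_const).const_mul
    _)

lemma lowWeight_nonneg {c : ℝ} (hc : 0 ≤ c) (e : Fin n) (y : Fin n → I) :
    0 ≤ lowWeight c p e y := by
  rw [lowWeight]
  positivity

lemma lowWeight_le {c : ℝ} (hc : 0 ≤ c) {e r : Fin n} (her : r ≠ e) (y : Fin n → I) :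
    lowWeight c p e y ≤ (c + 2) * (if (y r : ℝ) ≤ p then 1 else 0) := by
  have hn : 1 ≤ (n : ℝ) := by exact_mod_cast Fin.pos e
  have hκ : ((n : ℝ) + 1) / n ≤ 2 := by rw [div_le_iff₀ (by linarith)]; linarith
  rw [lowWeight]
  by_cases hr : (y r : ℝ) ≤ p
  · rw [if_pos hr]
    have h0 : 0 ≤ ((n : ℝ) + 1) / n := by positivity
    split_ifs <;> linarith
  · have h1 : ¬ total (Function.update y e 0) < p := fun h => hr (by
      have := coe_le_total (Function.update y e 0) r
      rw [Function.update_of_ne her] at this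
      linarith)
    have h2 : ¬ total y < p := fun h => hr (by linarith [coe_le_total y r])
    simp [hr, h1, h2]

lemma integral_coord_le (p : I) (r : Fin n) :
    ∫ y : Fin n → I, (if (y r : ℝ) ≤ p then (1:ℝ) else 0) = p := by
  have hev : MeasurePreserving (fun v : Fin n → I => v r) := measurePreserving_eval _ r
  have h : (fun y : Fin n → I => if (y r : ℝ) ≤ p then (1:ℝ) else 0)
      = ((fun v : Fin n → I => v r) ⁻¹' Iic p).indicator 1 := by
    funext y
    by_cases hy : (y r : ℝ) ≤ p
    · rw [if_pos hy, indicator_of_mem (by exact hy), Pi.one_apply]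
    · rw [if_neg hy, indicator_of_notMem (by exact hy)]
  rw [h, integral_indicator_one (hev.measurable measurableSet_Iic), Measure.real,
    hev.measure_preimage measurableSet_Iic.nullMeasurableSet, unitInterval.volume_Iic,
    ENNReal.toReal_ofReal p.2.1]

lemma integral_le_coord (p : I) (r : Fin n) :
    ∫ y : Fin n → I, (if (p : ℝ) ≤ y r then (1:ℝ) else 0) = 1 - p := by
  have hev : MeasurePreserving (fun v : Fin n → I => v r) := measurePreserving_eval _ r
  have h : (fun y : Fin n → I => if (p : ℝ) ≤ y r then (1:ℝ) else 0)
      = ((fun v : Fin n → I => v r) ⁻¹' Ici p).indicator 1 := by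
    funext y
    by_cases hy : (p : ℝ) ≤ y r
    · rw [if_pos hy, indicator_of_mem (by exact hy), Pi.one_apply]
    · rw [if_neg hy, indicator_of_notMem (by exact hy)]
  rw [h, integral_indicator_one (hev.measurable measurableSet_Ici), Measure.real,
    hev.measure_preimage measurableSet_Ici.nullMeasurableSet, unitInterval.volume_Ici,
    ENNReal.toReal_ofReal (by linarith [p.2.2])]

lemma measurable_le_coord (p : ℝ) (r : Fin n) :
    Measurable fun y : Fin n → I => if p ≤ (y r : ℝ) then (1:ℝ) else 0 :=
  Measurable.ite (measurableSet_le measurable_const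
    (measurable_subtype_coe.comp (measurable_pi_apply r))) measurable_const measurable_const

lemma measurable_coord_le (p : ℝ) (r : Fin n) :
    Measurable fun y : Fin n → I => if (y r : ℝ) ≤ p then (1:ℝ) else 0 :=
  Measurable.ite (measurableSet_le
    (measurable_subtype_coe.comp (measurable_pi_apply r)) measurable_const)
    measurable_const measurable_const

/-- A monotone function is positively correlated with the event that a coordinate is large. -/
lemma mul_integral_le_integral_of_monotone (hf : Monotone f) (hfm : Measurable f) (p : I)
    (e : Fin n) :
    (1 - p) * ∫ y, f y ≤ ∫ y, (if (p : ℝ) ≤ y e then 1 else 0) * f y := by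
  set χ : (Fin n → I) → ℝ := fun y => if (p : ℝ) ≤ y e then 1 else 0 with hχ
  have hχm : Measurable χ := measurable_le_coord p e
  have hχ01 : ∀ y, χ y = 0 ∨ χ y = 1 := fun y => by simp only [hχ]; split_ifs <;> simp
  set K := |f 0| + |f 1|
  have hfb : ∀ y, |f y| ≤ K := abs_le_of_monotone hf
  have hK : 0 ≤ K := by positivity
  set E := exchange (ι := Fin n) (fun j => j = e)
  have hEm : Measurable E := (measurePreserving_exchange _).measurable
  have hm1 : Measurable fun w : (Fin n → I) × (Fin n → I) => f w.1 * χ w.2 :=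
    (hfm.comp measurable_fst).mul (hχm.comp measurable_snd)
  have hm2 : Measurable fun w : (Fin n → I) × (Fin n → I) => f w.1 * χ w.1 * χ w.2 :=
    ((hfm.comp measurable_fst).mul (hχm.comp measurable_fst)).mul (hχm.comp measurable_snd)
  have hm3 : Measurable fun w : (Fin n → I) × (Fin n → I) => f w.1 * χ w.1 * (1 - χ w.2) :=
    ((hfm.comp measurable_fst).mul (hχm.comp measurable_fst)).mul
      ((hχm.comp measurable_snd).const_sub 1)
  have hi1 : Integrable fun w : (Fin n → I) × (Fin n → I) => f w.1 * χ w.2 :=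
    integrable_of_abs_le (K := K) hm1 fun w => by
      rcases hχ01 w.2 with h | h <;> simp [h, hfb, hK]
  have hi2 : Integrable fun w : (Fin n → I) × (Fin n → I) => f w.1 * χ w.1 * χ w.2 :=
    integrable_of_abs_le (K := K) hm2 fun w => by
      rcases hχ01 w.2 with h | h <;> rcases hχ01 w.1 with h' | h' <;> simp [h, h', hfb, hK]
  have hb3 : ∀ w : (Fin n → I) × (Fin n → I), |f w.1 * χ w.1 * (1 - χ w.2)| ≤ K := fun w => by
    rcases hχ01 w.2 with h | h <;> rcases hχ01 w.1 with h' | h' <;> simp [h, h', hfb, hK]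
  have hi3 : Integrable fun w : (Fin n → I) × (Fin n → I) => f w.1 * χ w.1 * (1 - χ w.2) :=
    integrable_of_abs_le hm3 hb3
  have hi3' : Integrable fun w : (Fin n → I) × (Fin n → I) =>
      f (E w).1 * χ (E w).1 * (1 - χ (E w).2) :=
    integrable_of_abs_le (hm3.comp hEm) fun w => hb3 _
  have hpt : ∀ w : (Fin n → I) × (Fin n → I), f w.1 * χ w.2
      ≤ f w.1 * χ w.1 * χ w.2 + f (E w).1 * χ (E w).1 * (1 - χ (E w).2) := fun w => by
    have hE1 : χ (E w).1 = χ w.2 := by simp [hχ, E, exchange]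
    have hE2 : χ (E w).2 = χ w.1 := by simp [hχ, E, exchange]
    rw [hE1, hE2]
    rcases hχ01 w.2 with h | h
    · simp [h]
    · rcases hχ01 w.1 with h' | h'
      · rw [h, h']
        have hle : f w.1 ≤ f (E w).1 := hf fun j => by
          by_cases hj : j = e
          · subst hj
            simp only [hχ] at h h'
            have h1 : (p:ℝ) ≤ w.2 j := by by_contra hcon; simp [hcon] at h
            have h2 : ¬ (p:ℝ) ≤ w.1 j := by intro hcon; simp [hcon] at h'
            have : (w.1 j : ℝ) ≤ w.2 j := by linarith
            simpa [E, exchange] using this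
          · simp [E, exchange, hj]
        linarith
      · simp [h, h']
  have hineq := integral_mono hi1 (hi2.add hi3') hpt
  simp only [Pi.add_apply] at hineq
  rw [integral_add hi2 hi3', integral_exchange (fun j => j = e)
      (G := fun w => f w.1 * χ w.1 * (1 - χ w.2)) hm3, ← integral_add hi2 hi3] at hineq
  have hL : ∫ w : (Fin n → I) × (Fin n → I), f w.1 * χ w.2 = (∫ y, f y) * (1 - p) := by
    rw [← integral_le_coord p e]
    exact integral_prod_mul f χ
  have hR : ∫ w : (Fin n → I) × (Fin n → I),
      (f w.1 * χ w.1 * χ w.2 + f w.1 * χ w.1 * (1 - χ w.2)) = ∫ y, χ y * f y := by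
    have h1 := integral_prod_mul (μ := (volume : Measure (Fin n → I)))
      (ν := (volume : Measure (Fin n → I))) (fun y => χ y * f y) (fun _ => (1:ℝ))
    simp only [integral_const, probReal_univ, smul_eq_mul, mul_one] at h1
    rw [← h1]
    refine integral_congr_ae (Filter.Eventually.of_forall fun w => ?_)
    change f w.1 * χ w.1 * χ w.2 + f w.1 * χ w.1 * (1 - χ w.2) = χ w.1 * f w.1
    ring
  rw [hL, hR] at hineq
  linarith

end Chain

section Dominance
variable {m : ℕ} {f : (Fin (m + 2) → I) → ℝ}

lemma monotone_update_one {n : ℕ} {f : (Fin n → I) → ℝ} (hf : Monotone f) (i : Fin n) :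
    Monotone fun y => f (Function.update y i 1) := fun _ _ h =>
  hf (update_le_update_iff.2 ⟨le_rfl, fun j _ => h j⟩)

lemma integral_coord_mul_gain {τ : Equiv.Perm (Fin (m + 2))} (hfm : Measurable f)
    (p : I) (k : Fin (m + 1)) :
    ∫ w : (Fin (m + 2) → I) × (Fin (m + 2) → I),
      gain f p (τ k.castSucc) (exchange (fun j => τ.symm j < k.castSucc) w).1
        * (if (w.2 (τ (Fin.last m).castSucc) : ℝ) ≤ p then 1 else 0)
      = (∫ y, gain f p (τ k.castSucc) y) * p := by
  set r := τ (Fin.last m).castSucc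
  have h1 := integral_exchange (fun j => τ.symm j < k.castSucc)
    (G := fun w : (Fin (m + 2) → I) × (Fin (m + 2) → I) =>
      gain f p (τ k.castSucc) w.1 * (if (w.2 r : ℝ) ≤ p then 1 else 0))
    (((measurable_gain hfm _).comp measurable_fst).mul
      ((measurable_coord_le (p : ℝ) r).comp measurable_snd))
  have h2 : ∀ w : (Fin (m + 2) → I) × (Fin (m + 2) → I),
      (exchange (fun j => τ.symm j < k.castSucc) w).2 r = w.2 r := fun w => by
    simp only [exchange]
    rw [if_neg]
    simpa [r] using Fin.le_last k
  simp only [h2] at h1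
  rw [h1]
  have h3 := integral_prod_mul (μ := (volume : Measure (Fin (m + 2) → I)))
    (ν := (volume : Measure (Fin (m + 2) → I))) (gain f p (τ k.castSucc))
    fun y => if (y r : ℝ) ≤ p then (1:ℝ) else 0
  rw [integral_coord_le p r] at h3
  exact h3

lemma facet_comparison (hf : Monotone f) (hfm : Measurable f) {c : ℝ} (hc : 0 ≤ c) (p : I)
    (τ : Equiv.Perm (Fin (m + 2))) :
    (1 - p) * ((∫ y, f (Function.update y (τ 0) 1)) *
        (∫ y, lowWeight c p (τ (Fin.last (m + 1))) y)
      - ∫ y, lowWeight c p (τ (Fin.last (m + 1))) y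
          * f (Function.update y (τ (Fin.last (m + 1))) 1))
      ≤ (c + 2) * p * ∑ k : Fin (m + 1), ∫ y, gain f p (τ k.castSucc) y := by
  set e := τ (Fin.last (m + 1)) with he
  set r := τ (Fin.last m).castSucc with hr
  have hre : r ≠ e := fun h => (Fin.castSucc_lt_last (Fin.last m)).ne (τ.injective h)
  set χ : (Fin (m + 2) → I) → ℝ := fun y => if (p : ℝ) ≤ y e then 1 else 0 with hχ
  set ξ : (Fin (m + 2) → I) → ℝ := fun y => if (y r : ℝ) ≤ p then 1 else 0 with hξ
  set W : (Fin (m + 2) → I) → ℝ := lowWeight c p e with hW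
  set F : (Fin (m + 2) → I) → ℝ := fun y => f (Function.update y (τ 0) 1) with hF
  set H : (Fin (m + 2) → I) → ℝ := fun y => f (Function.update y e 1) with hH
  set D : Fin (m + 1) → (Fin (m + 2) → I) × (Fin (m + 2) → I) → ℝ := fun k w =>
    gain f p (τ k.castSucc) (exchange (fun j => τ.symm j < k.castSucc) w).1 with hD
  set K := |f 0| + |f 1|
  have hK : 0 ≤ K := by positivity
  have hfb : ∀ y, |f y| ≤ K := abs_le_of_monotone hf
  have hFm : Measurable F := hfm.comp (measurable_update_coord _ 1)
  have hHm : Measurable H := hfm.comp (measurable_update_coord _ 1)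
  have hχm : Measurable χ := measurable_le_coord p e
  have hξm : Measurable ξ := measurable_coord_le p r
  have hWm : Measurable W := measurable_lowWeight c p e
  have hDm : ∀ k, Measurable (D k) := fun k => (measurable_gain hfm _).comp
    (measurable_fst.comp (measurePreserving_exchange _).measurable)
  have hχ0 : ∀ y, 0 ≤ χ y := fun y => by simp only [hχ]; positivity
  have hχ1 : ∀ y, χ y ≤ 1 := fun y => by simp only [hχ]; split_ifs <;> norm_num
  have hξ0 : ∀ y, 0 ≤ ξ y := fun y => by simp only [hξ]; positivity
  have hξ1 : ∀ y, ξ y ≤ 1 := fun y => by simp only [hξ]; split_ifs <;> norm_num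
  have hW0 : ∀ y, 0 ≤ W y := lowWeight_nonneg hc e
  have hWξ : ∀ y, W y ≤ (c + 2) * ξ y := lowWeight_le hc hre
  have hW1 : ∀ y, W y ≤ c + 2 := fun y =>
    (hWξ y).trans (mul_le_of_le_one_right (by linarith) (hξ1 y))
  have hD0 : ∀ k w, 0 ≤ D k w := fun k w => gain_nonneg hf _ _
  have hD1 : ∀ k w, D k w ≤ 2 * K := fun k w => gain_le hf _ _
  have hχa : ∀ y, |χ y| ≤ 1 := fun y => by rw [abs_of_nonneg (hχ0 y)]; exact hχ1 y
  have hWa : ∀ y, |W y| ≤ c + 2 := fun y => by rw [abs_of_nonneg (hW0 y)]; exact hW1 y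
  have hi1 : Integrable fun w : (Fin (m + 2) → I) × (Fin (m + 2) → I) =>
      (χ w.1 * F w.1) * W w.2 :=
    integrable_of_abs_le (K := 1 * K * (c + 2)) (by fun_prop) fun w => by
      rw [abs_mul, abs_mul]
      gcongr
      exacts [hχa _, hfb _, hWa _]
  have hi2 : Integrable fun w : (Fin (m + 2) → I) × (Fin (m + 2) → I) =>
      χ w.1 * (W w.2 * H w.2) :=
    integrable_of_abs_le (K := 1 * ((c + 2) * K)) (by fun_prop) fun w => by
      rw [abs_mul, abs_mul]
      gcongr
      exacts [hχa _, hWa _, hfb _]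
  have hi3 : ∀ k, Integrable fun w : (Fin (m + 2) → I) × (Fin (m + 2) → I) =>
      (c + 2) * (D k w * ξ w.2) := fun k =>
    (integrable_of_abs_le (K := 2 * K * 1) ((hDm k).mul (hξm.comp measurable_snd)) fun w => by
      rw [Pi.mul_apply, abs_mul, abs_of_nonneg (hD0 k w), Function.comp_apply,
        abs_of_nonneg (hξ0 _)]
      gcongr
      exacts [hD1 k w, hξ1 _]).const_mul _
  have hpt : ∀ w : (Fin (m + 2) → I) × (Fin (m + 2) → I), (χ w.1 * F w.1) * W w.2
      ≤ χ w.1 * (W w.2 * H w.2) + ∑ k, (c + 2) * (D k w * ξ w.2) := fun w => by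
    have hS0 : 0 ≤ ∑ k, D k w := Finset.sum_nonneg fun k _ => hD0 k w
    rw [← Finset.mul_sum, ← Finset.sum_mul]
    by_cases hw : (p : ℝ) ≤ w.1 e
    · have h1 : χ w.1 = 1 := if_pos hw
      have h2 : F w.1 ≤ H w.2 + ∑ k, D k w := le_add_sum_gain hf τ w.1 w.2 hw
      rw [h1, one_mul, one_mul]
      have h3 := mul_le_mul_of_nonneg_right h2 (hW0 w.2)
      have h4 := mul_le_mul_of_nonneg_left (hWξ w.2) hS0
      linarith
    · have h1 : χ w.1 = 0 := if_neg hw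
      rw [h1, zero_mul, zero_mul, zero_mul, zero_add]
      have := hξ0 w.2
      positivity
  have hineq := integral_mono hi1 (hi2.add (integrable_finsetSum Finset.univ fun k _ => hi3 k)) hpt
  simp only [Pi.add_apply] at hineq
  rw [integral_add hi2 (integrable_finsetSum Finset.univ fun k _ => hi3 k),
    integral_finsetSum Finset.univ fun k _ => hi3 k] at hineq
  simp only [integral_const_mul] at hineq
  have e1 : ∫ w : (Fin (m + 2) → I) × (Fin (m + 2) → I), (χ w.1 * F w.1) * W w.2
      = (∫ y, χ y * F y) * ∫ y, W y := integral_prod_mul (fun y => χ y * F y) W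
  have e2 : ∫ w : (Fin (m + 2) → I) × (Fin (m + 2) → I), χ w.1 * (W w.2 * H w.2)
      = (1 - p) * ∫ y, W y * H y := by
    rw [← integral_le_coord p e]
    exact integral_prod_mul χ (fun y => W y * H y)
  have e3 : ∀ k, ∫ w : (Fin (m + 2) → I) × (Fin (m + 2) → I), D k w * ξ w.2
      = (∫ y, gain f p (τ k.castSucc) y) * p := fun k => integral_coord_mul_gain hfm p k
  rw [e1, e2, Finset.sum_congr rfl fun k _ => by rw [e3 k], ← Finset.mul_sum,
    ← Finset.sum_mul] at hineq
  have h5 : (1 - p) * ∫ y, F y ≤ ∫ y, χ y * F y :=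
    mul_integral_le_integral_of_monotone (monotone_update_one hf _) hFm p e
  have h6 := mul_le_mul_of_nonneg_right h5 (integral_nonneg hW0 : 0 ≤ ∫ y, W y)
  linarith

/-- The restriction of the revenue functional to the region `p ≤ total` is nonnegative on
monotone functions. -/
lemma restricted_revenue_nonneg (hf : Monotone f) (hfm : Measurable f) {c : ℝ} (hc : 0 ≤ c)
    {p : I} (hp : (p : ℝ) < 1)
    (hsmall : (c + 2) * p * ((m + 1) * (m + 2)) ≤ (1 - p) * c)
    (hmass : ∀ i : Fin (m + 2), ∫ y, lowWeight c p i y = 1 / (m + 2)) :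
    0 ≤ ∑ i, ((c + 1) * (∫ y, f (Function.update y i 1))
        - c * ∫ y, (if total (Function.update y i 0) < p then 0 else f (Function.update y i 0)))
      - (m + 3) * ∫ y, (if total y < p then 0 else f y) := by
  set M : Fin (m + 2) → ℝ := fun i => ∫ y, f (Function.update y i 1) with hM
  set N : Fin (m + 2) → ℝ := fun i => ∫ y,
    (if total (Function.update y i 0) < p then 0 else f (Function.update y i 0)) with hN
  set Q : ℝ := ∫ y, (if total y < p then 0 else f y) with hQ
  set A : Fin (m + 2) → ℝ := fun i => ∫ y, gain f p i y with hA
  set L : Fin (m + 2) → ℝ := fun i => ∫ y, lowWeight c p i y * f (Function.update y i 1) with hL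
  set K := |f 0| + |f 1|
  have hK : 0 ≤ K := by positivity
  have hfb : ∀ y, |f y| ≤ K := abs_le_of_monotone hf
  have hum : ∀ i t, Measurable fun y => f (Function.update y i t) := fun i t =>
    hfm.comp (measurable_update_coord i t)
  have hui : ∀ i t, Integrable fun y => f (Function.update y i t) := fun i t =>
    integrable_of_abs_le (hum i t) fun _ => hfb _
  have hA0 : ∀ i, 0 ≤ A i := fun i => integral_nonneg (gain_nonneg hf i)
  have hNi : ∀ i, Integrable fun y =>
      (if total (Function.update y i 0) < p then 0 else f (Function.update y i 0)) := fun i =>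
    integrable_of_abs_le (K := K)
      (Measurable.ite (measurableSet_total_update_lt i p) measurable_const (hum i 0)) fun y => by
        split_ifs <;> simp [hK, hfb]
  have hQi : Integrable fun y : Fin (m + 2) → I => (if total y < p then 0 else f y) :=
    integrable_of_abs_le (K := K)
      (Measurable.ite (measurableSet_total_lt _) measurable_const hfm) fun y => by
        split_ifs <;> simp [hK, hfb]
  have hBi : ∀ i, Integrable fun y : Fin (m + 2) → I =>
      (if total y < p then f (Function.update y i 1) else 0) := fun i =>
    integrable_of_abs_le (K := K)
      (Measurable.ite (measurableSet_total_lt _) (hum i 1) measurable_const) fun y => by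
        split_ifs <;> simp [hK, hfb]
  have hCi : ∀ i, Integrable fun y : Fin (m + 2) → I =>
      (if total (Function.update y i 0) < p then f (Function.update y i 1) else 0) := fun i =>
    integrable_of_abs_le (K := K)
      (Measurable.ite (measurableSet_total_update_lt i p) (hum i 1) measurable_const) fun y => by
        split_ifs <;> simp [hK, hfb]
  set B : Fin (m + 2) → ℝ := fun i => ∫ y,
    (if total y < p then f (Function.update y i 1) else 0) with hB
  set C : Fin (m + 2) → ℝ := fun i => ∫ y,
    (if total (Function.update y i 0) < p then f (Function.update y i 1) else 0) with hC
  have hAeq : ∀ i, A i = M i - C i - N i := fun i => by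
    simp only [hA, hM, hC, hN]
    rw [← integral_sub (hui i 1) (hCi i), ← integral_sub _ (hNi i)]
    · refine integral_congr_ae (Filter.Eventually.of_forall fun y => ?_)
      simp only [gain]
      split_ifs <;> ring
    · exact (hui i 1).sub (hCi i)
  have hLeq : ∀ i, L i = c * C i + (m + 3) / (m + 2) * B i := fun i => by
    simp only [hL, hB, hC]
    rw [← integral_const_mul, ← integral_const_mul,
      ← integral_add ((hCi i).const_mul _) ((hBi i).const_mul _)]
    refine integral_congr_ae (Filter.Eventually.of_forall fun y => ?_)
    simp only [lowWeight]
    push_cast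
    split_ifs <;> ring
  have hQle : ∀ i, Q ≤ M i - B i := fun i => by
    simp only [hQ, hM, hB]
    rw [← integral_sub (hui i 1) (hBi i)]
    refine integral_mono hQi ((hui i 1).sub (hBi i)) fun y => ?_
    split_ifs
    · simp
    · rw [sub_zero]
      exact hf (le_update_iff.2 ⟨unitInterval.le_one', fun _ _ => le_rfl⟩)
  have hchain : ∀ i, (1 - (p:ℝ)) * (M i * (1 / (m + 2)) - L (i + Fin.last (m + 1)))
      ≤ (c + 2) * p * ((m + 1) * ∑ j, A j) := fun i => by
    have h := facet_comparison hf hfm hc p (Equiv.addLeft i)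
    simp only [Equiv.coe_addLeft, add_zero, hmass] at h
    refine h.trans ?_
    have h2 : ∑ k : Fin (m + 1), ∫ y, gain f p (i + k.castSucc) y ≤ (m + 1) * ∑ j, A j := by
      calc _ ≤ ∑ _k : Fin (m + 1), ∑ j, A j := Finset.sum_le_sum fun k _ =>
            Finset.single_le_sum (f := A) (fun j _ => hA0 j) (Finset.mem_univ (i + k.castSucc))
        _ = _ := by simp
    have : 0 ≤ (c + 2) * (p:ℝ) := mul_nonneg (by linarith) p.2.1
    exact mul_le_mul_of_nonneg_left h2 this
  have hsum := Finset.sum_le_sum (s := Finset.univ) fun i _ => hchain i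
  have hrot : ∑ i, L (i + Fin.last (m + 1)) = ∑ i, L i :=
    Fintype.sum_equiv (Equiv.addRight (Fin.last (m + 1))) _ _ fun _ => rfl
  rw [← Finset.mul_sum, Finset.sum_sub_distrib, hrot, ← Finset.sum_mul, Finset.sum_const,
    Finset.card_univ, Fintype.card_fin, nsmul_eq_mul] at hsum
  have hAs : 0 ≤ ∑ j, A j := Finset.sum_nonneg fun j _ => hA0 j
  have hfin : (∑ i, M i) * (1 / (m + 2)) - ∑ i, L i ≤ c * ∑ j, A j := by
    have h1 := mul_le_mul_of_nonneg_right hsmall hAs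
    push_cast at hsum
    refine le_of_mul_le_mul_left ?_ (by linarith : (0:ℝ) < 1 - p)
    linarith
  have hterm : ∀ i, c * A i + L i - M i * (1 / (m + 2)) + (m + 3) / (m + 2) * Q
      ≤ (c + 1) * M i - c * N i := fun i => by
    have h1 := mul_le_mul_of_nonneg_left (hQle i) (by positivity : (0:ℝ) ≤ (m + 3) / (m + 2))
    have h2 : ((m:ℝ) + 3) / (m + 2) = 1 + 1 / (m + 2) := by field_simp; ring
    rw [hLeq, hAeq]
    rw [h2] at h1 ⊢
    linarith
  have htot := Finset.sum_le_sum (s := Finset.univ) fun i _ => hterm i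
  rw [Finset.sum_add_distrib, Finset.sum_sub_distrib, Finset.sum_add_distrib, ← Finset.mul_sum,
    ← Finset.sum_mul, Finset.sum_const, Finset.card_univ, Fintype.card_fin, nsmul_eq_mul] at htot
  have h3 : ((m + 2 : ℕ) : ℝ) * ((m + 3) / (m + 2) * Q) = (m + 3) * Q := by
    push_cast; field_simp
  rw [h3] at htot
  linarith

end Dominance

section Price
variable {n : ℕ}

lemma total_update (y : Fin n → I) (i : Fin n) (t : I) :
    total (Function.update y i t) = total y - y i + t := by
  have h : ∀ j, ((Function.update y i t j : I) : ℝ)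
      = Function.update (fun j => (y j : ℝ)) i (t : ℝ) j := fun j => by
    by_cases hj : j = i
    · subst hj; simp
    · simp [hj]
  simp only [total, h]
  rw [Finset.sum_update_of_mem (Finset.mem_univ i), Finset.sdiff_singleton_eq_erase,
    Finset.sum_erase_eq_sub (Finset.mem_univ i)]
  ring

lemma total_nonneg (y : Fin n → I) : 0 ≤ total y := Finset.sum_nonneg fun j _ => (y j).2.1

lemma measurable_ite_lt {g : (Fin n → I) → ℝ} (hg : Measurable g) (p : ℝ) :
    Measurable fun y => if g y < p then (1:ℝ) else 0 :=
  Measurable.ite (measurableSet_lt hg measurable_const) measurable_const measurable_const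

lemma integrable_ite_lt {g : (Fin n → I) → ℝ} (hg : Measurable g) (p : ℝ) :
    Integrable fun y => if g y < p then (1:ℝ) else 0 :=
  integrable_of_abs_le (K := 1) (measurable_ite_lt hg p) fun y => by split_ifs <;> simp

/-- The level sets of a function with unit slope in one coordinate are null. -/
lemma ae_ne_of_update {g : (Fin n → I) → ℝ} (hg : Measurable g) (j : Fin n)
    (h : ∀ y t, g (Function.update y j t) = g y - y j + t) (p : ℝ) : ∀ᵐ y, g y ≠ p := by
  have hm : MeasurableSet {y | g y = p} := measurableSet_eq_fun hg measurable_const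
  have h1 := integral_resample j (G := {y | g y = p}.indicator 1) (K := 1)
    (measurable_one.indicator hm) fun y => by
      by_cases hy : y ∈ {y | g y = p} <;> simp [hy]
  have h2 : ∀ y, ∫ t : I, {y | g y = p}.indicator (1 : (Fin n → I) → ℝ)
      (Function.update y j t) = 0 := fun y => by
    refine integral_eq_zero_of_ae ?_
    have hs : {t : I | (t : ℝ) = p - (g y - y j)}.Subsingleton := fun s hs t ht =>
      Subtype.ext (hs.trans ht.symm)
    have h0 : ∀ᵐ t : I, t ∉ {t : I | (t : ℝ) = p - (g y - y j)} :=
      measure_eq_zero_iff_ae_notMem.1 (hs.measure_zero volume)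
    filter_upwards [h0] with t ht
    rw [indicator_of_notMem, Pi.zero_apply]
    intro hcon
    apply ht
    change g _ = p at hcon
    rw [h] at hcon
    linarith
  simp only [h2, integral_zero] at h1
  rw [integral_indicator_one hm, measureReal_eq_zero_iff] at h1
  exact measure_eq_zero_iff_ae_notMem.1 h1

lemma continuous_integral_ite_lt {g : (Fin n → I) → ℝ} (hg : Measurable g)
    (h : ∀ p, ∀ᵐ y, g y ≠ p) :
    Continuous fun p : ℝ => ∫ y, if g y < p then (1:ℝ) else 0 := by
  refine continuous_iff_continuousAt.2 fun p => ?_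
  refine continuousAt_of_dominated (bound := fun _ => 1)
    (Filter.Eventually.of_forall fun q => (measurable_ite_lt hg q).aestronglyMeasurable)
    (Filter.Eventually.of_forall fun q => Filter.Eventually.of_forall fun y => by
      split_ifs <;> simp) (integrable_const _) ?_
  filter_upwards [h p] with y hy
  rcases lt_or_gt_of_ne hy with hlt | hgt
  · refine (continuousAt_const (y := (1:ℝ))).congr ?_
    filter_upwards [eventually_gt_nhds hlt] with q hq
    rw [if_pos hq]
  · refine (continuousAt_const (y := (0:ℝ))).congr ?_
    filter_upwards [eventually_lt_nhds hgt] with q hq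
    rw [if_neg hq.not_gt]

lemma integral_facet_lt_eq (p : ℝ) (i j : Fin n) :
    ∫ y : Fin n → I, (if total (Function.update y i 0) < p then (1:ℝ) else 0)
      = ∫ y : Fin n → I, if total (Function.update y j 0) < p then (1:ℝ) else 0 := by
  have h := volume_measurePreserving_piCongrLeft (fun _ : Fin n => I) (Equiv.swap i j)
  rw [← h.integral_comp' fun y => if total (Function.update y i 0) < p then (1:ℝ) else 0]
  refine integral_congr_ae (Filter.Eventually.of_forall fun y => ?_)
  have hk : ∀ k, MeasurableEquiv.piCongrLeft (fun _ : Fin n => I) (Equiv.swap i j) y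
      (Equiv.swap i j k) = y k := fun k =>
    Equiv.piCongrLeft_apply_apply (fun _ : Fin n => I) (Equiv.swap i j) y k
  have ht : total (MeasurableEquiv.piCongrLeft (fun _ : Fin n => I) (Equiv.swap i j) y)
      = total y := by
    simp only [total]
    rw [← Equiv.sum_comp (Equiv.swap i j)]
    simp only [hk]
  have hi := hk j
  rw [Equiv.swap_apply_right] at hi
  simp only [total_update, ht, hi]

lemma integral_facet_lt_pos (i : Fin n) {δ : ℝ} (hδ : 0 < δ) :
    0 < ∫ y : Fin n → I, if total (Function.update y i 0) < δ then (1:ℝ) else 0 := by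
  have hn : 0 < (n:ℝ) := by exact_mod_cast Fin.pos i
  rw [integral_pos_iff_support_of_nonneg (fun y => by simp only [Pi.zero_apply]; positivity)
    (integrable_ite_lt (g := fun y => total (Function.update y i 0))
      (measurable_total.comp (measurable_update_coord i 0)) δ)]
  set ε : I := ⟨min 1 (δ / n), by positivity, min_le_left _ _⟩ with hε
  have hε0 : (0:ℝ) < ε := by rw [hε]; positivity
  have hsub : Set.pi univ (fun _ : Fin n => Iio ε)
      ⊆ Function.support fun y : Fin n → I =>
        if total (Function.update y i 0) < δ then (1:ℝ) else 0 := fun y hy => by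
    rw [Function.mem_support, if_pos]
    · exact one_ne_zero
    have h1 : total y < ∑ _j : Fin n, (ε : ℝ) :=
      Finset.sum_lt_sum_of_nonempty ⟨i, Finset.mem_univ i⟩ fun j _ => hy j (mem_univ j)
    have h2 : (n:ℝ) * ε ≤ δ := by
      have : (ε:ℝ) ≤ δ / n := min_le_right _ _
      rwa [le_div_iff₀' hn] at this
    simp only [Finset.sum_const, Finset.card_univ, Fintype.card_fin, nsmul_eq_mul] at h1
    rw [total_update]
    have := (y i).2.1
    simp only [Icc.coe_zero]
    linarith
  refine lt_of_lt_of_le ?_ (measure_mono hsub)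
  rw [volume_pi_pi]
  simp only [unitInterval.volume_Iio]
  rw [Finset.prod_const]
  exact ENNReal.pow_pos (ENNReal.ofReal_pos.2 hε0) _

/-- For large `c` there is a small price at which the exclusion region carries total weight
one. -/
lemma exists_price (m : ℕ) {δ : ℝ} (hδ : 0 < δ) :
    ∃ c₀ : ℝ, 0 ≤ c₀ ∧ ∀ c, c₀ ≤ c → ∃ p ∈ Icc 0 δ,
      ∀ i : Fin (m + 2), ∫ y, lowWeight c p i y = 1 / (m + 2) := by
  set a : ℝ → ℝ := fun p => ∫ y : Fin (m + 2) → I,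
    if total (Function.update y 0 0) < p then (1:ℝ) else 0 with ha
  set b : ℝ → ℝ := fun p => ∫ y : Fin (m + 2) → I, if total y < p then (1:ℝ) else 0 with hb
  have hm : ∀ i, Measurable fun y : Fin (m + 2) → I => total (Function.update y i 0) := fun i =>
    measurable_total.comp (measurable_update_coord i 0)
  have hac : Continuous a := continuous_integral_ite_lt (hm 0) <| ae_ne_of_update (hm 0) 1
    fun y t => by
      rw [Function.update_comm (by simp), total_update _ 1,
        Function.update_of_ne (by simp)]
  have hbc : Continuous b := continuous_integral_ite_lt measurable_total <|
    ae_ne_of_update measurable_total 0 fun y t => total_update y 0 t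
  have ha0 : a 0 = 0 := by
    simp only [ha, (total_nonneg _).not_gt, if_false, integral_zero]
  have hb0 : b 0 = 0 := by
    simp only [hb, (total_nonneg _).not_gt, if_false, integral_zero]
  have haδ : 0 < a δ := integral_facet_lt_pos 0 hδ
  have hbδ : 0 ≤ b δ := integral_nonneg fun y => by simp only [Pi.zero_apply]; positivity
  refine ⟨1 / a δ, by positivity, fun c hc => ?_⟩
  have hcont : ContinuousOn (fun p => c * a p + (m + 3) / (m + 2) * b p) (Icc 0 δ) := by
    fun_prop
  have h1 : (1:ℝ) / (m + 2) ≤ c * a δ + (m + 3) / (m + 2) * b δ := by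
    have h2 : 1 ≤ c * a δ := by rwa [div_le_iff₀ haδ] at hc
    have h3 : (1:ℝ) / (m + 2) ≤ 1 := by
      rw [div_le_one (by positivity)]
      linarith [(Nat.cast_nonneg m : (0:ℝ) ≤ m)]
    have : 0 ≤ ((m:ℝ) + 3) / (m + 2) * b δ := by positivity
    linarith
  obtain ⟨p, hp, hpe⟩ := intermediate_value_Icc hδ.le hcont
    ⟨by simp only [ha0, hb0, mul_zero, add_zero]; positivity, h1⟩
  refine ⟨p, hp, fun i => ?_⟩
  simp only [lowWeight]
  rw [integral_add ((integrable_ite_lt (hm i) p).const_mul _)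
    ((integrable_ite_lt measurable_total p).const_mul _), integral_const_mul, integral_const_mul,
    integral_facet_lt_eq p i 0, ← hpe]
  push_cast
  simp only [ha, hb]
  ring

end Price

section Optimality

lemma total_le {n : ℕ} (y : Fin n → I) : total y ≤ n := by
  have := Finset.sum_le_sum (s := Finset.univ) fun j _ => (y j).2.2
  simpa [total] using this

/-- Passing from the utility `u` to the bundling utility `max (total - p) 0` raises the revenue by
at least the restricted revenue functional of the slack `total - p - u`. -/
lemma revenueFunctional_add_restricted_le {n : ℕ} {c p : ℝ} (hc : 0 ≤ c) (hp : p ∈ Icc (0:ℝ) 1)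
    {u : (Fin n → I) → ℝ} (hum : Measurable u) {K : ℝ} (hub : ∀ y, |u y| ≤ K)
    (hu0 : ∀ y, 0 ≤ u y) :
    revenueFunctional c u + (∑ i, ((c + 1) *
          (∫ y, (total (Function.update y i 1) - p - u (Function.update y i 1)))
        - c * ∫ y, (if total (Function.update y i 0) < p then 0
            else total (Function.update y i 0) - p - u (Function.update y i 0)))
      - (n + 1) * ∫ y, (if total y < p then 0 else total y - p - u y))
    ≤ revenueFunctional c fun y : Fin n → I => max (total y - p) 0 := by
  set s : (Fin n → I) → ℝ := fun y => max (total y - p) 0 with hs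
  set g : (Fin n → I) → ℝ := fun y => if total y < p then 0 else total y - p - u y with hg
  have hsm : Measurable s := (measurable_total.sub_const p).max measurable_const
  have hgm : Measurable g := Measurable.ite (measurableSet_total_lt p) measurable_const
    ((measurable_total.sub_const p).sub hum)
  have hsb : ∀ y, |s y| ≤ n := fun y => by
    rw [abs_of_nonneg (le_max_right _ _)]
    exact max_le (by linarith [total_le y, hp.1]) (by positivity)
  have hgb : ∀ y, |g y| ≤ n + 1 + K := fun y => by
    have h1 := (abs_nonneg _).trans (hub y)
    have h2 := abs_le.1 (hub y)
    have h3 := total_le y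
    have h4 := total_nonneg y
    have h5 : (0:ℝ) ≤ n := by positivity
    simp only [hg]
    split_ifs
    · rw [abs_zero]; linarith
    · rw [abs_le]
      constructor <;> linarith [hp.1, hp.2, h2.1, h2.2]
  have hle : ∀ y, s y ≤ u y + g y := fun y => by
    simp only [hs, hg]
    have := hu0 y
    split_ifs with h
    · rw [max_eq_right (by linarith)]; linarith
    · rw [max_eq_left (by linarith [not_lt.1 h])]; linarith
  have hui : Integrable u := integrable_of_abs_le hum hub
  have hgi : Integrable g := integrable_of_abs_le hgm hgb
  have hupd : ∀ {v : (Fin n → I) → ℝ} {L : ℝ}, Measurable v → (∀ y, |v y| ≤ L) → ∀ i t,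
      Integrable fun y => v (Function.update y i t) := fun hv hL i t =>
    integrable_of_abs_le (hv.comp (measurable_update_coord i t)) fun _ => hL _
  have hE : ∫ y, s y ≤ (∫ y, u y) + ∫ y, g y := by
    rw [← integral_add hui hgi]
    exact integral_mono (integrable_of_abs_le hsm hsb) (hui.add hgi) hle
  have h0 : ∀ i, ∫ y, s (Function.update y i 0)
      ≤ (∫ y, u (Function.update y i 0)) + ∫ y, g (Function.update y i 0) := fun i => by
    rw [← integral_add (hupd hum hub i 0) (hupd hgm hgb i 0)]
    exact integral_mono (hupd hsm hsb i 0) ((hupd hum hub i 0).add (hupd hgm hgb i 0))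
      fun y => hle _
  have h1 : ∀ i, ∫ y, (total (Function.update y i 1) - p - u (Function.update y i 1))
      = (∫ y, s (Function.update y i 1)) - ∫ y, u (Function.update y i 1) := fun i => by
    rw [← integral_sub (hupd hsm hsb i 1) (hupd hum hub i 1)]
    refine integral_congr_ae (Filter.Eventually.of_forall fun y => ?_)
    have h2 := coe_le_total (Function.update y i 1) i
    rw [Function.update_self, Icc.coe_one] at h2
    simp only [hs]
    rw [max_eq_left (by linarith [hp.2])]
  have hterm := Finset.sum_le_sum (s := Finset.univ) fun i _ =>
    (by
      have := mul_le_mul_of_nonneg_left (h0 i) hc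
      rw [h1 i]
      linarith : ((c + 1) * (∫ y, u (Function.update y i 1))
          - c * ∫ y, u (Function.update y i 0))
        + ((c + 1) * (∫ y, (total (Function.update y i 1) - p - u (Function.update y i 1)))
          - c * ∫ y, g (Function.update y i 0))
        ≤ (c + 1) * (∫ y, s (Function.update y i 1)) - c * ∫ y, s (Function.update y i 0))
  rw [Finset.sum_add_distrib] at hterm
  have hE' := mul_le_mul_of_nonneg_left hE (by positivity : (0:ℝ) ≤ n + 1)
  rw [revenueFunctional, revenueFunctional]
  linarith

lemma monotone_slack {n : ℕ} {u : (Fin n → I) → ℝ} (p : ℝ)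
    (hlip : ∀ y y', y ≤ y' → u y' - u y ≤ total y' - total y) :
    Monotone fun y => total y - p - u y := fun y y' h => by
  have := hlip y y' h
  simp only
  linarith

/-- For large `c`, some bundling utility maximizes the revenue functional among the nonnegative
utilities with slopes at most one. -/
lemma exists_bundle_threshold {n : ℕ} (hn : 1 ≤ n) :
    ∃ c₀ : ℝ, 0 ≤ c₀ ∧ ∀ c, c₀ ≤ c → ∃ p : ℝ, ∀ (u : (Fin n → I) → ℝ) (K : ℝ),
      Measurable u → (∀ y, |u y| ≤ K) → (∀ y, 0 ≤ u y) →
      (∀ y y', y ≤ y' → u y' - u y ≤ total y' - total y) →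
      revenueFunctional c u ≤ revenueFunctional c fun y : Fin n → I => max (total y - p) 0 := by
  obtain _ | _ | m := n
  · omega
  · refine ⟨1, zero_le_one, fun c hc => ⟨0, fun u K hum hub hu0 hlip => ?_⟩⟩
    refine le_trans (le_add_of_nonneg_right ?_)
      (revenueFunctional_add_restricted_le (by linarith : 0 ≤ c) ⟨le_rfl, zero_le_one⟩ hum hub hu0)
    set f : (Fin 1 → I) → ℝ := fun y => total y - 0 - u y with hf
    have hfm : Measurable f := (measurable_total.sub_const 0).sub hum
    have hmono : Monotone f := monotone_slack 0 hlip
    have hupd : ∀ (y : Fin 1 → I) (t : I), Function.update y 0 t = fun _ => t := fun y t => by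
      funext j
      rw [Subsingleton.elim j 0, Function.update_self]
    have hE : ∫ y, f y ≤ f 1 := by
      have := integral_mono (integrable_of_abs_le hfm (abs_le_of_monotone hmono))
        (integrable_const (f 1)) fun y => hmono (fun j => unitInterval.le_one' : y ≤ 1)
      simpa using this
    have hf0 : f 0 ≤ 0 := by
      simp only [hf, total]
      have := hu0 0
      simpa using this
    have h01 : f 0 ≤ f 1 := hmono fun j => unitInterval.nonneg'
    simp only [(total_nonneg _).not_gt, if_false]
    change 0 ≤ ∑ i, ((c + 1) * (∫ y, f (Function.update y i 1))
      - c * ∫ y, f (Function.update y i 0)) - (((0 + 1 : ℕ) : ℝ) + 1) * ∫ y, f y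
    have h0 : (fun _ : Fin 1 => (0 : I)) = 0 := rfl
    have h1 : (fun _ : Fin 1 => (1 : I)) = 1 := rfl
    simp only [zero_add, Fin.sum_univ_one, hupd, integral_const, probReal_univ, one_smul, h0, h1,
      Nat.cast_one]
    nlinarith
  · set δ : ℝ := 1 / (2 * ((m + 1) * (m + 2)) + 2) with hδ
    have hδ0 : 0 < δ := by positivity
    obtain ⟨c₁, -, H⟩ := exists_price m hδ0
    refine ⟨max 2 c₁, le_trans zero_le_two (le_max_left _ _), fun c hc => ?_⟩
    have hc2 : 2 ≤ c := (le_max_left _ _).trans hc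
    obtain ⟨p, hp, hmass⟩ := H c ((le_max_right _ _).trans hc)
    have hm : (0:ℝ) ≤ m := by positivity
    have hpδ : p * (2 * ((m + 1) * (m + 2)) + 2) ≤ 1 := by
      have := hp.2
      rwa [hδ, le_div_iff₀ (by positivity)] at this
    have hpm : 0 ≤ p * (((m:ℝ) + 1) * (m + 2)) := mul_nonneg hp.1 (by positivity)
    have hp1 : p < 1 := by linarith
    refine ⟨p, fun u K hum hub hu0 hlip => ?_⟩
    refine le_trans (le_add_of_nonneg_right ?_)
      (revenueFunctional_add_restricted_le (by linarith : 0 ≤ c) ⟨hp.1, hp1.le⟩ hum hub hu0)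
    have hres := restricted_revenue_nonneg (p := ⟨p, hp.1, hp1.le⟩) (monotone_slack p hlip)
      ((measurable_total.sub_const p).sub hum) (by linarith : 0 ≤ c) hp1
      (by
        have h1 : (c + 2) * (p * (((m:ℝ) + 1) * (m + 2))) ≤ 2 * c * (p * ((m + 1) * (m + 2))) :=
          mul_le_mul_of_nonneg_right (by linarith) hpm
        have h2 := mul_le_mul_of_nonneg_left hpδ (by linarith : 0 ≤ c)
        have h3 : 0 ≤ c * p := mul_nonneg (by linarith) hp.1
        simp only
        linarith) hmass
    have hcast : ((m + 1 + 1 : ℕ) : ℝ) + 1 = m + 3 := by push_cast; ring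
    rw [hcast]
    exact hres

end Optimality

end Bundling

/-- **Grand bundling is optimal for shifted uniform items.** For every `n ≥ 1` there is a
`c₀ ≥ 0` such that for all `c ≥ c₀` there is a price `p` with the property that every IC and
IR mechanism `(P, T)` on the type space `X = [c, c+1]ⁿ` (with `T` Lebesgue-integrable on `X`)
earns expected revenue `∫_X T` at most the revenue `∫_X T_p` of the grand-bundling mechanism
at price `p`, whose payment is `p` if `Σᵢ xᵢ ≥ p` and `0` otherwise. -/
theorem grand_bundling_optimal_shifted_uniform (n : ℕ) (hn : 1 ≤ n) :
    ∃ c₀ : ℝ, 0 ≤ c₀ ∧ ∀ c : ℝ, c₀ ≤ c →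
      ∃ p : ℝ, ∀ (P : (Fin n → ℝ) → (Fin n → ℝ)) (T : (Fin n → ℝ) → ℝ),
        Measurable P → Measurable T →
        (∀ x, ∀ i, P x i ∈ Set.Icc (0:ℝ) 1) →
        (∀ x ∈ box (fun _ => c) (fun _ => c + 1), ∀ x' ∈ box (fun _ => c) (fun _ => c + 1),
          dotp x (P x') - T x' ≤ dotp x (P x) - T x) →
        (∀ x ∈ box (fun _ => c) (fun _ => c + 1), 0 ≤ dotp x (P x) - T x) →
        IntegrableOn T (box (fun _ => c) (fun _ => c + 1)) volume →
        (∫ x in (box (fun _ => c) (fun _ => c + 1) : Set (Fin n → ℝ)), T x) ≤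
          ∫ x in (box (fun _ => c) (fun _ => c + 1) : Set (Fin n → ℝ)),
            (if p ≤ ∑ i, x i then p else (0:ℝ)) := by
  obtain ⟨c₀, hc₀, H⟩ := exists_bundle_threshold hn
  refine ⟨c₀, hc₀, fun c hc => ?_⟩
  obtain ⟨p, hp⟩ := H c hc
  refine ⟨n * c + p, fun P T hPm hTm hP hIC hIR _ => ?_⟩
  have hbox : (box (fun _ => c) (fun _ => c + 1) : Set (Fin n → ℝ))
      = {x | ∀ i, x i ∈ Set.Icc c (c + 1)} := rfl
  have hmem : ∀ y : Fin n → unitInterval,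
      (fun i => c + (y i : ℝ)) ∈ box (fun _ => c) (fun _ => c + 1) := fun y i =>
    ⟨by linarith [(y i).2.1], by linarith [(y i).2.2]⟩
  have hshift : Measurable fun (y : Fin n → unitInterval) i => c + (y i : ℝ) :=
    measurable_pi_lambda _ fun i =>
      (measurable_subtype_coe.comp (measurable_pi_apply i)).const_add c
  rw [hbox, integral_box_eq, integral_box_eq]
  set Q : (Fin n → unitInterval) → Fin n → ℝ := fun y => P fun i => c + y i with hQ
  set u : (Fin n → unitInterval) → ℝ := fun y =>
    ∑ i, (c + (y i : ℝ)) * Q y i - T fun i => c + y i with hu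
  have hQm : Measurable Q := hPm.comp hshift
  have hQ01 : ∀ y i, Q y i ∈ Icc (0:ℝ) 1 := fun y i => hP _ i
  have hum : Measurable u := (Finset.measurable_sum _ fun i _ =>
    ((measurable_pi_apply i).comp hshift).mul ((measurable_pi_apply i).comp hQm)).sub
      (hTm.comp hshift)
  have hsub : ∀ x x', u x' + ∑ i, ((x i : ℝ) - x' i) * Q x' i ≤ u x := fun x x' => by
    have h := hIC _ (hmem x) _ (hmem x')
    have h2 : ∑ i, (c + (x i : ℝ)) * Q x' i
        = ∑ i, (c + (x' i : ℝ)) * Q x' i + ∑ i, ((x i : ℝ) - x' i) * Q x' i := by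
      rw [← Finset.sum_add_distrib]
      exact Finset.sum_congr rfl fun i _ => by ring
    simp only [dotp] at h
    simp only [hu]
    linarith
  have hu0 : ∀ y, 0 ≤ u y := fun y => hIR _ (hmem y)
  have hlip : ∀ y y', y ≤ y' → u y' - u y ≤ total y' - total y := fun y y' hy => by
    have h := hsub y y'
    have h2 : ∑ i, ((y' i : ℝ) - y i) * Q y' i ≤ ∑ i, ((y' i : ℝ) - y i) :=
      Finset.sum_le_sum fun i _ =>
        mul_le_of_le_one_right (sub_nonneg.2 (hy i)) (hQ01 y' i).2
    have h3 : ∑ i, ((y i : ℝ) - y' i) * Q y' i = - ∑ i, ((y' i : ℝ) - y i) * Q y' i := by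
      rw [← Finset.sum_neg_distrib]
      exact Finset.sum_congr rfl fun i _ => by ring
    rw [Finset.sum_sub_distrib] at h2
    simp only [total]
    linarith
  have hrev := integral_revenue_eq c hQm hum hQ01 hsub
  have hbundle := integral_revenue_eq c
    (P := fun (y : Fin n → unitInterval) (_ : Fin n) => if p ≤ total y then (1:ℝ) else 0)
    (u := fun y => max (total y - p) 0)
    (measurable_pi_lambda _ fun _ => Measurable.ite
      (measurableSet_le measurable_const measurable_total) measurable_const measurable_const)
    ((measurable_total.sub_const p).max measurable_const)
    (fun y i => by split_ifs <;> simp)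
    (fun x x' => by
      rw [← Finset.sum_mul, Finset.sum_sub_distrib]
      change _ + (total x - total x') * _ ≤ _
      split_ifs with h
      · rw [max_eq_left (by linarith)]
        exact le_max_of_le_left (by linarith)
      · rw [max_eq_right (by linarith)]
        exact le_max_of_le_right (by linarith))
  have hT : ∀ y : Fin n → unitInterval, T (fun i => c + y i)
      = ∑ i, (c + (y i : ℝ)) * Q y i - u y := fun y => by simp only [hu]; ring
  have hB : ∀ y : Fin n → unitInterval,
      (if n * c + p ≤ ∑ i, (c + (y i : ℝ)) then n * c + p else 0)
      = ∑ i, (c + (y i : ℝ)) * (if p ≤ total y then (1:ℝ) else 0) - max (total y - p) 0 :=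
    fun y => by
      have h1 : ∑ i, (c + (y i : ℝ)) = n * c + total y := by
        simp [Finset.sum_add_distrib, total]
      rw [← Finset.sum_mul, h1]
      simp only [add_le_add_iff_left]
      split_ifs with h
      · rw [max_eq_left (by linarith)]; ring
      · rw [max_eq_right (by linarith)]; ring
  simp only [hT, hB]
  rw [hrev, hbundle]
  exact hp u _ hum (abs_le_of_subgradient hQ01 hsub) hu0 hlip
end

section
/- Grand bundling is suboptimal for many uniform items: For every c ≥ 0 there exists an integer n₀ such that for all n ≥ n₀ and every price p ∈ ℝ, there exists an IC and IR mechanism (𝒫, 𝒯) on the type space X = [c, c+1]ⁿ with 𝒯 Lebesgue-integrable such that ∫_X 𝒯(x) dx > ∫_X 𝒯_p(x) dx, where (𝒫_p, 𝒯_p) is the grand-bundling mechanism at price p. That is, for n iid items uniform on [c, c+1] with n sufficiently large, no take-it-or-leave-it offer of the grand bundle maximizes expected revenue. -/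
open MeasureTheory Set

lemma box_eq_pi {n : ℕ} (a b : Fin n → ℝ) : box a b = univ.pi fun i => Icc (a i) (b i) := by
  ext x; simp [box, -pi_univ_Icc]

lemma measurableSet_box {n : ℕ} (a b : Fin n → ℝ) : MeasurableSet (box a b) := by
  rw [box_eq_pi]
  exact MeasurableSet.univ_pi fun _ => measurableSet_Icc

lemma volume_box {n : ℕ} (a b : Fin n → ℝ) :
    volume (box a b) = ∏ i, ENNReal.ofReal (b i - a i) := by
  rw [box_eq_pi, volume_pi_pi]
  simp

lemma volume_unit_box (n : ℕ) (c : ℝ) :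
    volume (box (n := n) (fun _ => c) (fun _ => c + 1)) = 1 := by
  simp [volume_box]

instance isProbabilityMeasure_restrict_unit_box (n : ℕ) (c : ℝ) :
    IsProbabilityMeasure (volume.restrict (box (n := n) (fun _ => c) (fun _ => c + 1))) :=
  ⟨by rw [Measure.restrict_apply_univ, volume_unit_box]⟩

/-- The payment of the grand-bundling mechanism at price `p`. -/
noncomputable def bundlePayment {n : ℕ} (p : ℝ) (x : Fin n → ℝ) : ℝ :=
  if p ≤ ∑ i, x i then p else 0

/-- The types that take the grand bundle at price `p` when item `k` alone is offered
at price `t`. -/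
def bundleBuyers {n : ℕ} (k : Fin n) (p t : ℝ) : Set (Fin n → ℝ) :=
  {x | p ≤ ∑ i, x i ∧ x k - t ≤ ∑ i, x i - p}

open Classical in
/-- The allocation when the grand bundle is offered at price `p` and item `k` alone at
price `t`. -/
noncomputable def menuAlloc {n : ℕ} (k : Fin n) (p t : ℝ) (x : Fin n → ℝ) : Fin n → ℝ :=
  if x ∈ bundleBuyers k p t then fun _ => 1 else if t ≤ x k then Pi.single k 1 else 0

open Classical in
/-- The payment when the grand bundle is offered at price `p` and item `k` alone at
price `t`. -/
noncomputable def menuPayment {n : ℕ} (k : Fin n) (p t : ℝ) (x : Fin n → ℝ) : ℝ :=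
  if x ∈ bundleBuyers k p t then p else if t ≤ x k then t else 0

lemma measurableSet_bundleBuyers {n : ℕ} (k : Fin n) (p t : ℝ) :
    MeasurableSet (bundleBuyers k p t) := by
  rw [bundleBuyers, ofPred_and]
  exact (measurableSet_le (by fun_prop) (by fun_prop)).inter
    (measurableSet_le (by fun_prop) (by fun_prop))

lemma measurable_menuAlloc {n : ℕ} (k : Fin n) (p t : ℝ) : Measurable (menuAlloc k p t) :=
  Measurable.ite (measurableSet_bundleBuyers k p t) measurable_const
    (Measurable.ite (measurableSet_le (by fun_prop) (by fun_prop)) measurable_const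
      measurable_const)

lemma measurable_menuPayment {n : ℕ} (k : Fin n) (p t : ℝ) : Measurable (menuPayment k p t) :=
  Measurable.ite (measurableSet_bundleBuyers k p t) measurable_const
    (Measurable.ite (measurableSet_le (by fun_prop) (by fun_prop)) measurable_const
      measurable_const)

lemma measurable_bundlePayment {n : ℕ} (p : ℝ) : Measurable (bundlePayment (n := n) p) :=
  Measurable.ite (measurableSet_le (by fun_prop) (by fun_prop)) measurable_const
    measurable_const

lemma menuAlloc_mem_Icc {n : ℕ} (k : Fin n) (p t : ℝ) (x : Fin n → ℝ) (i : Fin n) :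
    menuAlloc k p t x i ∈ Icc (0 : ℝ) 1 := by
  unfold menuAlloc
  split_ifs
  · simp
  · by_cases h : i = k
    · subst h; simp
    · simp [h]
  · simp

/-- Reporting `y` gives type `x` the value of one of the three menu entries. -/
lemma menu_utility_eq {n : ℕ} (k : Fin n) (p t : ℝ) (x y : Fin n → ℝ) :
    dotp x (menuAlloc k p t y) - menuPayment k p t y = ∑ i, x i - p ∨
    dotp x (menuAlloc k p t y) - menuPayment k p t y = x k - t ∨
    dotp x (menuAlloc k p t y) - menuPayment k p t y = 0 := by
  unfold menuAlloc menuPayment dotp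
  split_ifs <;> simp [Pi.single_apply]

/-- Truthful reporting gives the value of the best menu entry. -/
lemma menu_utility_self {n : ℕ} (k : Fin n) (p t : ℝ) (x : Fin n → ℝ) :
    dotp x (menuAlloc k p t x) - menuPayment k p t x =
      max (max (∑ i, x i - p) (x k - t)) 0 := by
  unfold menuAlloc menuPayment dotp bundleBuyers
  simp only [mem_ofPred_eq]
  split_ifs with h h'
  · rw [max_eq_left h.2, max_eq_left (by linarith [h.1])]
    simp
  · have : ∑ i, x i - p ≤ x k - t := by
      by_contra! h2
      exact h ⟨by linarith, h2.le⟩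
    rw [max_eq_right this, max_eq_left (by linarith)]
    simp [Pi.single_apply]
  · have : ∑ i, x i < p := by
      by_contra! h2
      exact h ⟨h2, by linarith⟩
    rw [max_eq_right (max_le (by linarith) (by linarith))]
    simp

lemma menu_incentiveCompatible {n : ℕ} (k : Fin n) (p t : ℝ) (x y : Fin n → ℝ) :
    dotp x (menuAlloc k p t y) - menuPayment k p t y ≤
      dotp x (menuAlloc k p t x) - menuPayment k p t x := by
  rw [menu_utility_self]
  rcases menu_utility_eq k p t x y with h | h | h <;> rw [h] <;> simp

lemma menu_individuallyRational {n : ℕ} (k : Fin n) (p t : ℝ) (x : Fin n → ℝ) :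
    0 ≤ dotp x (menuAlloc k p t x) - menuPayment k p t x := by
  rw [menu_utility_self]
  exact le_max_right _ _

lemma integrable_menuPayment {n : ℕ} (k : Fin n) (p t : ℝ) (μ : Measure (Fin n → ℝ))
    [IsFiniteMeasure μ] : Integrable (menuPayment k p t) μ := by
  refine Integrable.of_bound (measurable_menuPayment k p t).aestronglyMeasurable
    (|p| + |t|) (.of_forall fun x => ?_)
  unfold menuPayment
  have := abs_nonneg p
  have := abs_nonneg t
  rw [Real.norm_eq_abs]
  split_ifs <;> (try rw [abs_zero]) <;> linarith

lemma integrable_bundlePayment {n : ℕ} (p : ℝ) (μ : Measure (Fin n → ℝ))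
    [IsFiniteMeasure μ] : Integrable (bundlePayment p) μ := by
  refine Integrable.of_bound (measurable_bundlePayment p).aestronglyMeasurable
    |p| (.of_forall fun x => ?_)
  unfold bundlePayment
  rw [Real.norm_eq_abs]
  split_ifs <;> simp

/-- If item `k` alone is priced above its maximal value, nobody buys it alone. -/
lemma menuPayment_eq_bundlePayment {n : ℕ} (k : Fin n) {p t : ℝ} {x : Fin n → ℝ}
    (h : x k < t) : menuPayment k p t x = bundlePayment p x := by
  unfold menuPayment bundlePayment bundleBuyers
  simp only [mem_ofPred_eq]
  by_cases hp : p ≤ ∑ i, x i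
  · rw [if_pos ⟨hp, by linarith⟩, if_pos hp]
  · rw [if_neg (fun h2 => hp h2.1), if_neg hp, if_neg (not_le.2 h)]

/-- The shear replacing the coordinate `j` by the sum of all coordinates preserves volume. -/
lemma volume_preimage_update_sum {n : ℕ} (j : Fin n) {s : Set (Fin n → ℝ)}
    (hs : MeasurableSet s) :
    volume {x : Fin n → ℝ | Function.update x j (∑ i, x i) ∈ s} = volume s := by
  set M : Matrix (Fin n) (Fin n) ℝ := (1 : Matrix (Fin n) (Fin n) ℝ).updateRow j
    (∑ k, (1 : ℝ) • (1 : Matrix (Fin n) (Fin n) ℝ) k) with hM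
  have hdet : M.det = 1 := by
    rw [hM, Matrix.det_updateRow_sum (1 : Matrix (Fin n) (Fin n) ℝ) j (fun _ => 1)]
    simp
  have hmap := Real.map_matrix_volume_pi_eq_smul_volume_pi (M := M) (by rw [hdet]; norm_num)
  rw [hdet] at hmap
  have hfun : ∀ x : Fin n → ℝ, Matrix.toLin' M x = Function.update x j (∑ i, x i) := by
    intro x
    ext i
    rw [Matrix.toLin'_apply]
    by_cases h : i = j
    · subst h
      have hrow : ∀ l, (∑ k, (1 : Matrix (Fin n) (Fin n) ℝ) k) l = 1 := fun l => by
        refine (Finset.sum_apply _ _ _).trans ?_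
        simp [Matrix.one_apply]
      simp [hM, Matrix.mulVec, dotProduct, hrow]
    · simp [hM, Matrix.mulVec, dotProduct, h, Matrix.one_apply]
  have hmeas : Measurable (Matrix.toLin' M) :=
    (LinearMap.continuous_of_finiteDimensional _).measurable
  calc _ = volume ((Matrix.toLin' M) ⁻¹' s) := by
        congr 1; ext x; simp only [mem_preimage, hfun, mem_ofPred_eq]
    _ = Measure.map (Matrix.toLin' M) volume s := (Measure.map_apply hmeas hs).symm
    _ = volume s := by rw [hmap]; simp

/-- Types with a high value for item `k` and a total value in an interval of length `δ` have
volume at most `δ ^ 2`. -/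
lemma volume_switchers_le {n : ℕ} {k j : Fin n} (hkj : k ≠ j) (c p : ℝ) {δ : ℝ} (hδ : 0 ≤ δ) :
    volume (box (fun _ => c) (fun _ => c + 1) ∩
      {x : Fin n → ℝ | c + 1 - δ ≤ x k ∧ ∑ i, x i ∈ Icc p (p + δ)}) ≤
      ENNReal.ofReal (δ ^ 2) := by
  set a : Fin n → ℝ := Function.update (Function.update (fun _ => c) k (c + 1 - δ)) j p with ha
  set b : Fin n → ℝ := Function.update (fun _ => c + 1) j (p + δ) with hb
  have hvol : volume (box a b) = ENNReal.ofReal (δ ^ 2) := by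
    rw [volume_box, ← Finset.mul_prod_erase _ _ (Finset.mem_univ k),
      ← Finset.mul_prod_erase _ _ (Finset.mem_erase.2 ⟨hkj.symm, Finset.mem_univ j⟩),
      Finset.prod_eq_one]
    · simp [ha, hb, hkj, pow_two, ENNReal.ofReal_mul hδ]
    · intro i hi
      simp only [Finset.mem_erase] at hi
      simp [ha, hb, hi.1, hi.2.1]
  rw [← hvol, ← volume_preimage_update_sum j (measurableSet_box a b)]
  refine measure_mono ?_
  rintro x ⟨hx, hxk, hxs⟩ i
  by_cases hij : i = j
  · subst hij
    simpa [ha, hb] using hxs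
  · by_cases hik : i = k
    · subst hik
      simpa [ha, hb, hij, -tsub_le_iff_right] using And.intro hxk (hx i).2
    · simpa [ha, hb, hij, hik] using hx i

/-- Types that value item `k` at least at `c + 1 - δ` and do not afford the bundle have volume
at least of order `δ`. -/
lemma le_volume_newBuyers {n : ℕ} (k : Fin n) {c p δ η : ℝ} (hδ : 0 ≤ δ) (hδ1 : δ ≤ 1)
    (hη : 0 < η) (hη1 : η ≤ 1) (hp : n * c + 1 + n * η ≤ p) :
    ENNReal.ofReal (δ * η ^ (n - 1)) ≤ volume (box (fun _ => c) (fun _ => c + 1) ∩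
      {x : Fin n → ℝ | c + 1 - δ ≤ x k ∧ ∑ i, x i < p}) := by
  set a : Fin n → ℝ := Function.update (fun _ => c) k (c + 1 - δ) with ha
  set b : Fin n → ℝ := Function.update (fun _ => c + η) k (c + 1) with hb
  have hvol : volume (box a b) = ENNReal.ofReal (δ * η ^ (n - 1)) := by
    rw [volume_box, ← Finset.mul_prod_erase _ _ (Finset.mem_univ k),
      Finset.prod_congr rfl (g := fun _ => ENNReal.ofReal η)]
    · simp [ha, hb, ENNReal.ofReal_mul hδ, ENNReal.ofReal_pow hη.le]
    · intro i hi
      simp [ha, hb, Finset.ne_of_mem_erase hi]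
  rw [← hvol]
  refine measure_mono fun x hx => ?_
  have hk : x k ∈ Icc (c + 1 - δ) (c + 1) := by simpa [ha, hb] using hx k
  have hne : ∀ i, i ≠ k → x i ∈ Icc c (c + η) := fun i hi => by
    simpa [ha, hb, hi] using hx i
  refine ⟨fun i => ?_, hk.1, ?_⟩
  · by_cases hi : i = k
    · subst hi; exact ⟨by linarith [hk.1], hk.2⟩
    · exact ⟨(hne i hi).1, by linarith [(hne i hi).2]⟩
  · have hn : 1 ≤ n := k.pos
    have hsum : ∑ i ∈ Finset.univ.erase k, x i ≤ (n - 1) * (c + η) := by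
      refine (Finset.sum_le_card_nsmul _ _ (c + η) fun i hi =>
        (hne i (Finset.ne_of_mem_erase hi)).2).trans_eq ?_
      simp only [Finset.card_erase_of_mem (Finset.mem_univ k), Finset.card_univ,
        Fintype.card_fin, nsmul_eq_mul, Nat.cast_sub hn, Nat.cast_one]
    rw [← Finset.add_sum_erase _ _ (Finset.mem_univ k)]
    nlinarith [hk.2]

/-- When the price exceeds `n c + 1`, offering a single item in addition to the bundle at a
suitable price raises revenue. -/
lemma exists_menu_gt_bundle {n : ℕ} {k j : Fin n} (hkj : k ≠ j) {c p : ℝ} (hc : 0 ≤ c)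
    (hp : n * c + 1 < p) :
    ∃ t : ℝ, ∫ x in box (n := n) (fun _ => c) (fun _ => c + 1), bundlePayment p x <
      ∫ x in box (fun _ => c) (fun _ => c + 1), menuPayment k p t x := by
  have hn : (0 : ℝ) < n := by exact_mod_cast k.pos
  have hp0 : 0 < p := by nlinarith
  obtain ⟨η, hη, hη1, hηp⟩ : ∃ η : ℝ, 0 < η ∧ η ≤ 1 ∧ n * c + 1 + n * η ≤ p := by
    refine ⟨min 1 ((p - (n * c + 1)) / n), lt_min one_pos (div_pos (by linarith) hn),
      min_le_left _ _, ?_⟩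
    have := mul_le_mul_of_nonneg_left (min_le_right 1 ((p - (n * c + 1)) / n)) hn.le
    rw [mul_div_cancel₀ _ hn.ne'] at this
    linarith
  have hηn : 0 < η ^ (n - 1) := pow_pos hη _
  obtain ⟨δ, hδ, hδ2, hδp⟩ : ∃ δ : ℝ, 0 < δ ∧ δ ≤ 1 / 2 ∧ p * δ < 1 / 2 * η ^ (n - 1) := by
    refine ⟨min (1 / 2) (η ^ (n - 1) / (4 * p)), lt_min (by norm_num) (by positivity),
      min_le_left _ _, ?_⟩
    have := mul_le_mul_of_nonneg_left (min_le_right (1 / 2) (η ^ (n - 1) / (4 * p))) hp0.le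
    have h2 : p * (η ^ (n - 1) / (4 * p)) = η ^ (n - 1) / 4 := by field_simp
    linarith
  set t : ℝ := c + 1 - δ with ht
  have htpos : 1 / 2 ≤ t := by linarith
  refine ⟨t, ?_⟩
  set B : Set (Fin n → ℝ) := box (fun _ => c) (fun _ => c + 1) with hB
  set G : Set (Fin n → ℝ) := {x | t ≤ x k ∧ ∑ i, x i < p} with hG
  set L : Set (Fin n → ℝ) := {x | t ≤ x k ∧ ∑ i, x i ∈ Icc p (p + δ)} with hL
  have hBm : MeasurableSet B := measurableSet_box _ _
  have hGm : MeasurableSet G := by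
    rw [hG, ofPred_and]
    exact (measurableSet_le (by fun_prop) (by fun_prop)).inter
      (measurableSet_lt (by fun_prop) (by fun_prop))
  have hLm : MeasurableSet L := by
    simp only [hL, mem_Icc, ofPred_and]
    exact (measurableSet_le (by fun_prop) (by fun_prop)).inter
      ((measurableSet_le (by fun_prop) (by fun_prop)).inter
        (measurableSet_le (by fun_prop) (by fun_prop)))
  have hGv : δ * η ^ (n - 1) ≤ (volume.restrict B).real G := by
    rw [measureReal_def, Measure.restrict_apply hGm, inter_comm,
      ← ENNReal.ofReal_le_iff_le_toReal
        (((measure_mono inter_subset_left).trans_eq (volume_unit_box n c)).trans_lt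
          ENNReal.one_lt_top).ne]
    exact le_volume_newBuyers k hδ.le (by linarith) hη hη1 hηp
  have hLv : (volume.restrict B).real L ≤ δ ^ 2 := by
    rw [measureReal_def, Measure.restrict_apply hLm, inter_comm]
    exact ENNReal.toReal_le_of_le_ofReal (sq_nonneg δ) (volume_switchers_le hkj c p hδ.le)
  have hGi : Integrable (G.indicator fun _ => t) (volume.restrict B) :=
    (integrable_const t).indicator hGm
  have hLi : Integrable (L.indicator fun _ => p) (volume.restrict B) :=
    (integrable_const p).indicator hLm
  have hle : ∫ x in B, (bundlePayment p x + G.indicator (fun _ => t) x) ≤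
      ∫ x in B, (menuPayment k p t x + L.indicator (fun _ => p) x) := by
    refine setIntegral_mono_on ((integrable_bundlePayment p _).add hGi)
      ((integrable_menuPayment k p t _).add hLi) hBm fun x hx => ?_
    have hxk : x k ≤ c + 1 := (hx k).2
    simp only [bundlePayment, menuPayment, bundleBuyers, indicator, hG, hL, mem_ofPred_eq, mem_Icc]
    split_ifs <;> grind
  rw [integral_add (integrable_bundlePayment p _) hGi,
    integral_add (integrable_menuPayment k p t _) hLi,
    integral_indicator_const _ hGm, integral_indicator_const _ hLm, smul_eq_mul, smul_eq_mul]
    at hle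
  have h1 : δ * η ^ (n - 1) * (1 / 2) ≤ (volume.restrict B).real G * t :=
    mul_le_mul hGv htpos (by norm_num) (by positivity)
  have h2 : (volume.restrict B).real L * p ≤ δ ^ 2 * p :=
    mul_le_mul_of_nonneg_right hLv hp0.le
  nlinarith [mul_lt_mul_of_pos_left hδp hδ]

/-- The revenue from the bundle never exceeds a nonnegative upper bound for its price. -/
lemma integral_bundlePayment_le {n : ℕ} (c : ℝ) {p q : ℝ} (hq : 0 ≤ q) (hpq : p ≤ q) :
    ∫ x in box (n := n) (fun _ => c) (fun _ => c + 1), bundlePayment p x ≤ q := by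
  have := integral_mono (integrable_bundlePayment p
      (volume.restrict (box (n := n) (fun _ => c) (fun _ => c + 1))))
    (integrable_const q) fun x => show bundlePayment p x ≤ q by
      unfold bundlePayment; split_ifs <;> assumption
  simpa using this

lemma integral_exp_neg_unit_interval (c : ℝ) :
    ∫ x in Icc c (c + 1), Real.exp (-(x - c)) = 1 - Real.exp (-1) := by
  rw [integral_Icc_eq_integral_Ioc, ← intervalIntegral.integral_of_le (by linarith),
    intervalIntegral.integral_comp_sub_right (fun x => Real.exp (-x)) c,
    intervalIntegral.integral_comp_neg (fun x => Real.exp x)]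
  simp

lemma integral_prod_exp_neg_unit_box (n : ℕ) (c : ℝ) :
    ∫ x in box (n := n) (fun _ => c) (fun _ => c + 1), ∏ i, Real.exp (-(x i - c)) =
      (1 - Real.exp (-1)) ^ n := by
  rw [box_eq_pi, volume_pi, Measure.restrict_pi_pi,
    integral_fintype_prod_eq_prod (fun _ x => Real.exp (-(x - c)))]
  simp only [integral_exp_neg_unit_interval, Finset.prod_const, Finset.card_univ,
    Fintype.card_fin]

/-- A Chernoff-type lower bound for the revenue of the bundle at price `n c + 2`. -/
lemma le_integral_bundlePayment {n : ℕ} {c : ℝ} (hc : 0 ≤ c) :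
    (n * c + 2) - (n * c + 2) * (Real.exp 2 * (1 - Real.exp (-1)) ^ n) ≤
      ∫ x in box (n := n) (fun _ => c) (fun _ => c + 1), bundlePayment (n * c + 2) x := by
  set q : ℝ := n * c + 2 with hq
  have hq0 : 0 < q := by positivity
  set μ := volume.restrict (box (n := n) (fun _ => c) (fun _ => c + 1)) with hμ
  have hint : Integrable (fun x : Fin n → ℝ => ∏ i, Real.exp (-(x i - c))) μ := by
    rw [hμ, box_eq_pi, volume_pi, Measure.restrict_pi_pi]
    refine Integrable.fintype_prod (f := fun _ x => Real.exp (-(x - c))) fun i => ?_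
    exact (Continuous.integrableOn_Icc (by fun_prop))
  have hint' : Integrable
      (fun x : Fin n → ℝ => q * (Real.exp 2 * ∏ i, Real.exp (-(x i - c)))) μ :=
    (hint.const_mul _).const_mul _
  have hle : ∫ x, (q - q * (Real.exp 2 * ∏ i, Real.exp (-(x i - c)))) ∂μ ≤
      ∫ x, bundlePayment q x ∂μ := by
    refine integral_mono ((integrable_const q).sub hint') (integrable_bundlePayment q μ)
      fun x => ?_
    have hprod : Real.exp 2 * ∏ i, Real.exp (-(x i - c)) = Real.exp (q - ∑ i, x i) := by
      rw [← Real.exp_sum, ← Real.exp_add]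
      congr 1
      simp [hq]
      ring
    simp only [hprod, bundlePayment]
    split_ifs with h
    · nlinarith [Real.exp_pos (q - ∑ i, x i)]
    · nlinarith [Real.add_one_le_exp (q - ∑ i, x i)]
  rw [integral_sub (integrable_const q) hint', integral_const_mul, integral_const_mul,
    integral_prod_exp_neg_unit_box] at hle
  simpa using hle

/-- For many items, the bundle at price `n c + 2` yields more than `n c + 1`. -/
lemma eventually_lt_integral_bundlePayment {c : ℝ} (hc : 0 ≤ c) :
    ∀ᶠ n : ℕ in Filter.atTop, n * c + 1 <
      ∫ x in box (n := n) (fun _ => c) (fun _ => c + 1), bundlePayment (n * c + 2) x := by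
  set r : ℝ := 1 - Real.exp (-1) with hr
  have hr0 : 0 ≤ r := by
    have : Real.exp (-1) ≤ 1 := Real.exp_le_one_iff.2 (by norm_num)
    linarith
  have hr1 : r < 1 := by linarith [Real.exp_pos (-1)]
  have hlim : Filter.Tendsto
      (fun n : ℕ => Real.exp 2 * c * (n * r ^ n) + 2 * Real.exp 2 * r ^ n)
      Filter.atTop (nhds (Real.exp 2 * c * 0 + 2 * Real.exp 2 * 0)) :=
    ((tendsto_self_mul_const_pow_of_lt_one hr0 hr1).const_mul _).add
      ((tendsto_pow_atTop_nhds_zero_of_lt_one hr0 hr1).const_mul _)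
  filter_upwards [hlim.eventually_lt_const (u := 1) (by norm_num)] with n hn
  have := le_integral_bundlePayment (n := n) hc
  rw [← hr] at this
  nlinarith

/-- **Grand bundling is suboptimal for many uniform items.** For every `c ≥ 0` there is an
`n₀` such that for all `n ≥ n₀` and every price `p`, there exists an IC and IR mechanism
`(P, T)` on the type space `X = [c, c+1]ⁿ` (with `T` Lebesgue-integrable on `X`) whose
expected revenue `∫_X T` strictly exceeds the revenue of the grand-bundling mechanism at
price `p`, whose payment is `p` if `Σᵢ xᵢ ≥ p` and `0` otherwise. -/
theorem grand_bundling_suboptimal_many_uniform_items (c : ℝ) (hc : 0 ≤ c) :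
    ∃ n₀ : ℕ, ∀ n : ℕ, n₀ ≤ n → ∀ p : ℝ,
      ∃ (P : (Fin n → ℝ) → (Fin n → ℝ)) (T : (Fin n → ℝ) → ℝ),
        Measurable P ∧ Measurable T ∧
        (∀ x, ∀ i, P x i ∈ Set.Icc (0:ℝ) 1) ∧
        (∀ x ∈ box (fun _ => c) (fun _ => c + 1), ∀ x' ∈ box (fun _ => c) (fun _ => c + 1),
          dotp x (P x') - T x' ≤ dotp x (P x) - T x) ∧
        (∀ x ∈ box (fun _ => c) (fun _ => c + 1), 0 ≤ dotp x (P x) - T x) ∧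
        IntegrableOn T (box (fun _ => c) (fun _ => c + 1)) volume ∧
        (∫ x in (box (fun _ => c) (fun _ => c + 1) : Set (Fin n → ℝ)),
            (if p ≤ ∑ i, x i then p else (0:ℝ))) <
          ∫ x in (box (fun _ => c) (fun _ => c + 1) : Set (Fin n → ℝ)), T x := by
  obtain ⟨N, hN⟩ := Filter.eventually_atTop.1 (eventually_lt_integral_bundlePayment hc)
  refine ⟨max N 2, fun n hn p => ?_⟩
  have hn2 : 2 ≤ n := (le_max_right _ _).trans hn
  let k : Fin n := ⟨0, by omega⟩
  let j : Fin n := ⟨1, by omega⟩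
  have hkj : k ≠ j := by simp [k, j]
  obtain ⟨q, t, hqt⟩ : ∃ q t : ℝ,
      ∫ x in box (n := n) (fun _ => c) (fun _ => c + 1), bundlePayment p x <
        ∫ x in box (fun _ => c) (fun _ => c + 1), menuPayment k q t x := by
    rcases lt_or_ge (n * c + 1) p with hp | hp
    · exact ⟨p, exists_menu_gt_bundle hkj hc hp⟩
    · refine ⟨n * c + 2, c + 2, ?_⟩
      rw [setIntegral_congr_fun (measurableSet_box _ _) fun x hx =>
        menuPayment_eq_bundlePayment k (by linarith [(hx k).2])]
      exact (integral_bundlePayment_le c (by positivity) hp).trans_lt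
        (hN n ((le_max_left _ _).trans hn))
  exact ⟨menuAlloc k q t, menuPayment k q t, measurable_menuAlloc k q t,
    measurable_menuPayment k q t, menuAlloc_mem_Icc k q t,
    fun x _ y _ => menu_incentiveCompatible k q t x y,
    fun x _ => menu_individuallyRational k q t x, integrable_menuPayment k q t _, hqt⟩
end
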